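/- arXiv:math/9902031 — 2 statements merged into one kernel-verified Lean document; each statement's English description precedes it below -/
import Mathlib

section
/- Let q be a nonzero real number. There exists a Haar measure μ on U_q(2,-2), i.e. a linear map μ : U_q(2,-2) → ℂ with μ(1) = 1 and (id ⊗ μ) ∘ α = u ∘ μ for the coaction α : U_q(2,-2) → U_q(2) ⊗ U_q(2,-2) (given by α(z_{ij}) = Σ_k x_{ik} ⊗ z_{kj}, α(τ) = t ⊗ τ), and μ is positive: μ(z*z) ≥ 0 for all z ∈ U_q(2,-2). -/
open TensorProduct ComplexOrder

/-- The five generators `x11, x12, x21, x22, t` of the algebra `GL_q(2)`. -/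
inductive XGen : Type
  | x11 | x12 | x21 | x22 | t

def Xf (k : Type) [Field k] : XGen → FreeAlgebra k XGen := FreeAlgebra.ι k

/-- The defining relations of `GL_q(2)`. -/
inductive GLq2Rel (k : Type) [Field k] (q : k) :
    FreeAlgebra k XGen → FreeAlgebra k XGen → Prop
  | r1 : GLq2Rel k q (Xf k .x12 * Xf k .x11) (q • (Xf k .x11 * Xf k .x12))
  | r2 : GLq2Rel k q (Xf k .x21 * Xf k .x11) (q • (Xf k .x11 * Xf k .x21))
  | r3 : GLq2Rel k q (Xf k .x22 * Xf k .x12) (q • (Xf k .x12 * Xf k .x22))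
  | r4 : GLq2Rel k q (Xf k .x22 * Xf k .x21) (q • (Xf k .x21 * Xf k .x22))
  | r5 : GLq2Rel k q (Xf k .x12 * Xf k .x21) (Xf k .x21 * Xf k .x12)
  | r6 : GLq2Rel k q (Xf k .x11 * Xf k .x22 - Xf k .x22 * Xf k .x11)
      ((q⁻¹ - q) • (Xf k .x12 * Xf k .x21))
  | r7 : GLq2Rel k q (Xf k .x11 * Xf k .t) (Xf k .t * Xf k .x11)
  | r8 : GLq2Rel k q (Xf k .x22 * Xf k .t) (Xf k .t * Xf k .x22)
  | r9 : GLq2Rel k q (Xf k .x12 * Xf k .t) (Xf k .t * Xf k .x12)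
  | r10 : GLq2Rel k q (Xf k .x21 * Xf k .t) (Xf k .t * Xf k .x21)
  | r11 : GLq2Rel k q ((Xf k .x11 * Xf k .x22 - q⁻¹ • (Xf k .x12 * Xf k .x21)) * Xf k .t) 1

/-- The algebra `GL_q(2)`. -/
abbrev GLq2 (k : Type) [Field k] (q : k) := RingQuot (GLq2Rel k q)

/-- The five generators `z11, z12, z21, z22, τ` of the algebra `GL_q(2,-2)`. -/
inductive ZGen : Type
  | z11 | z12 | z21 | z22 | tau

def Zf (k : Type) [Field k] : ZGen → FreeAlgebra k ZGen := FreeAlgebra.ι k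

/-- The defining relations of `GL_q(2,-2)`. -/
inductive GLq22Rel (k : Type) [Field k] (q : k) :
    FreeAlgebra k ZGen → FreeAlgebra k ZGen → Prop
  | r1 : GLq22Rel k q (Zf k .z12 * Zf k .z11) (-(q • (Zf k .z11 * Zf k .z12)))
  | r2 : GLq22Rel k q (Zf k .z21 * Zf k .z11) (q • (Zf k .z11 * Zf k .z21))
  | r3 : GLq22Rel k q (Zf k .z22 * Zf k .z12) (q • (Zf k .z12 * Zf k .z22))
  | r4 : GLq22Rel k q (Zf k .z22 * Zf k .z21) (-(q • (Zf k .z21 * Zf k .z22)))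
  | r5 : GLq22Rel k q (Zf k .z12 * Zf k .z21) (-(Zf k .z21 * Zf k .z12))
  | r6 : GLq22Rel k q (Zf k .z11 * Zf k .z22 + Zf k .z22 * Zf k .z11)
      ((q - q⁻¹) • (Zf k .z12 * Zf k .z21))
  | r7 : GLq22Rel k q (Zf k .z11 * Zf k .tau) (-(Zf k .tau * Zf k .z11))
  | r8 : GLq22Rel k q (Zf k .z22 * Zf k .tau) (-(Zf k .tau * Zf k .z22))
  | r9 : GLq22Rel k q (Zf k .z12 * Zf k .tau) (-(Zf k .tau * Zf k .z12))
  | r10 : GLq22Rel k q (Zf k .z21 * Zf k .tau) (-(Zf k .tau * Zf k .z21))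
  | r11 : GLq22Rel k q ((Zf k .z11 * Zf k .z22 + q⁻¹ • (Zf k .z12 * Zf k .z21)) * Zf k .tau) 1

/-- The algebra `GL_q(2,-2)`. -/
abbrev GLq22 (k : Type) [Field k] (q : k) := RingQuot (GLq22Rel k q)

noncomputable section

/-- The generating matrix entries `x_{ij}` of `GL_q(2)`. -/
def xM (k : Type) [Field k] (q : k) : Fin 2 → Fin 2 → GLq2 k q :=
  ![![RingQuot.mkAlgHom k (GLq2Rel k q) (Xf k .x11),
     RingQuot.mkAlgHom k (GLq2Rel k q) (Xf k .x12)],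
    ![RingQuot.mkAlgHom k (GLq2Rel k q) (Xf k .x21),
     RingQuot.mkAlgHom k (GLq2Rel k q) (Xf k .x22)]]

/-- The element `t` of `GL_q(2)`. -/
def tE (k : Type) [Field k] (q : k) : GLq2 k q := RingQuot.mkAlgHom k (GLq2Rel k q) (Xf k .t)

/-- The generating matrix entries `z_{ij}` of `GL_q(2,-2)`. -/
def zM (k : Type) [Field k] (q : k) : Fin 2 → Fin 2 → GLq22 k q :=
  ![![RingQuot.mkAlgHom k (GLq22Rel k q) (Zf k .z11),
     RingQuot.mkAlgHom k (GLq22Rel k q) (Zf k .z12)],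
    ![RingQuot.mkAlgHom k (GLq22Rel k q) (Zf k .z21),
     RingQuot.mkAlgHom k (GLq22Rel k q) (Zf k .z22)]]

/-- The element `τ` of `GL_q(2,-2)`. -/
def tauE (k : Type) [Field k] (q : k) : GLq22 k q :=
  RingQuot.mkAlgHom k (GLq22Rel k q) (Zf k .tau)


namespace Haar22
set_option linter.unusedSimpArgs false
set_option linter.unusedTactic false
set_option linter.unreachableTactic false

/-- Convenient relations. -/
structure Nice {S : Type} [Ring S] [Algebra ℂ S] (p : ℂ) (a b A B t t' : S) : Prop where
  ba : b * a = p • (a * b)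
  Ba : B * a = p • (a * B)
  Ab : A * b = p • (b * A)
  AB : A * B = p • (B * A)
  Bb : B * b = b * B
  aA : a * A = 1 - b * B
  Aa : A * a = 1 - (p * p) • (b * B)
  ta : t * a = -(a * t)
  tb : t * b = -(b * t)
  tA : t * A = -(A * t)
  tB : t * B = -(B * t)
  tt : t * t' = 1
  tt' : t' * t = 1

theorem anti_inv {S : Type} [Ring S] {t t' a : S} (h : t * t' = 1) (h' : t' * t = 1)
    (ha : t * a = -(a * t)) : t' * a = -(a * t') := by
  calc t' * a = t' * (a * (t * t')) := by rw [h, mul_one]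
    _ = t' * (a * t) * t' := by noncomm_ring
    _ = -(t' * (t * a) * t') := by rw [ha]; noncomm_ring
    _ = -(t' * t * (a * t')) := by noncomm_ring
    _ = _ := by rw [h', one_mul]

section nice
variable {S : Type} [Ring S] [Algebra ℂ S] {p : ℂ} {a b A B t t' : S}

theorem Nice.t'a (n : Nice p a b A B t t') : t' * a = -(a * t') := anti_inv n.tt n.tt' n.ta
theorem Nice.t'b (n : Nice p a b A B t t') : t' * b = -(b * t') := anti_inv n.tt n.tt' n.tb
theorem Nice.t'A (n : Nice p a b A B t t') : t' * A = -(A * t') := anti_inv n.tt n.tt' n.tA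
theorem Nice.t'B (n : Nice p a b A B t t') : t' * B = -(B * t') := anti_inv n.tt n.tt' n.tB

/-- images of the free generators -/
def gimg (q : ℂ) (a b A B t t' : S) : ZGen → S
  | .z11 => a
  | .z12 => b
  | .z21 => q • (B * t')
  | .z22 => A * t'
  | .tau => t

theorem gimg_rel {q : ℂ} (hq : q ≠ 0) (n : Nice (-q) a b A B t t') ⦃x y : FreeAlgebra ℂ ZGen⦄
    (h : GLq22Rel ℂ q x y) :
    FreeAlgebra.lift ℂ (gimg q a b A B t t') x = FreeAlgebra.lift ℂ (gimg q a b A B t t') y := by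
  have e1 : ∀ X Y : S, t' * (X * Y) = t' * X * Y := fun X Y => (mul_assoc _ _ _).symm
  have t'a := n.t'a
  have t'b := n.t'b
  have t'A := n.t'A
  have t'B := n.t'B
  have bB : b * B = B * b := n.Bb.symm
  have comm : ∀ {X : S}, t' * X = -(X * t') → ∀ Y, t' * (X * Y) = -(X * (t' * Y)) := by
    intro X h Y
    rw [← mul_assoc, h, neg_mul, mul_assoc]
  have commt : ∀ {X : S}, t * X = -(X * t) → ∀ Y, t * (X * Y) = -(X * (t * Y)) := by
    intro X h Y
    rw [← mul_assoc, h, neg_mul, mul_assoc]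
  have lc : ∀ {X Y : S} {c : ℂ}, X * Y = c • (Y * X) → ∀ Z, X * (Y * Z) = c • (Y * (X * Z)) := by
    intro X Y c h Z
    rw [← mul_assoc, h, smul_mul_assoc, mul_assoc]
  have lA : ∀ Z, a * (A * Z) = Z - b * (B * Z) := by
    intro Z; rw [← mul_assoc, n.aA, sub_mul, one_mul, mul_assoc]
  have lA' : ∀ Z, A * (a * Z) = Z - (q*q) • (b * (B * Z)) := by
    intro Z; rw [← mul_assoc, n.Aa, sub_mul, one_mul, smul_mul_assoc, mul_assoc, neg_mul_neg]
  have lB : ∀ Z, B * (b * Z) = b * (B * Z) := by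
    intro Z; rw [← mul_assoc, n.Bb, mul_assoc]
  cases h <;> simp only [map_mul, map_smul, map_neg, map_add, map_one, Xf, Zf,
    FreeAlgebra.lift_ι_apply, gimg, smul_mul_assoc, mul_smul_comm, mul_assoc, t'a, t'b, t'A, t'B,
    comm t'a, comm t'b, comm t'A, comm t'B, lc n.ba, lc n.Ba, lc n.Ab, lc n.AB, n.ba, n.Ba, n.Ab,
    n.AB, lA, lA', lB, mul_neg, neg_mul, n.Bb, n.tt', mul_one, n.ta, n.tb, n.tA, n.tB,
    commt n.tA, commt n.tB, n.tt]
  · module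
  · module
  · module
  · module
  · module
  · match_scalars <;> field_simp <;> ring
  · module
  · module
  · module
  · module
  · rw [smul_smul, inv_mul_cancel₀ hq, one_smul, sub_add_cancel, n.tt']

end nice

/-- the algebra -/
abbrev Z (q : ℂ) := GLq22 ℂ q

section gens
variable (q : ℂ)
def za : Z q := RingQuot.mkAlgHom ℂ (GLq22Rel ℂ q) (Zf ℂ .z11)
def zb : Z q := RingQuot.mkAlgHom ℂ (GLq22Rel ℂ q) (Zf ℂ .z12)
def zc : Z q := RingQuot.mkAlgHom ℂ (GLq22Rel ℂ q) (Zf ℂ .z21)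
def zd : Z q := RingQuot.mkAlgHom ℂ (GLq22Rel ℂ q) (Zf ℂ .z22)
def zt : Z q := RingQuot.mkAlgHom ℂ (GLq22Rel ℂ q) (Zf ℂ .tau)
def zt' : Z q := za q * zd q + q⁻¹ • (zb q * zc q)
def zA : Z q := zd q * zt q
def zB : Z q := q⁻¹ • (zc q * zt q)

variable {q}
theorem mkrel {x y : FreeAlgebra ℂ ZGen} (h : GLq22Rel ℂ q x y) :
    RingQuot.mkAlgHom ℂ (GLq22Rel ℂ q) x = RingQuot.mkAlgHom ℂ (GLq22Rel ℂ q) y :=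
  RingQuot.mkAlgHom_rel ℂ h

theorem rba : zb q * za q = (-q) • (za q * zb q) := by
  have : zb q * za q = -(q • (za q * zb q)) := by
    simpa [za, zb, zc, zd, zt, zt'] using mkrel (GLq22Rel.r1 (q := q))
  rw [this]; exact (neg_smul q (za q * zb q)).symm
theorem rca : zc q * za q = q • (za q * zc q) := by
  simpa [za, zb, zc, zd, zt, zt'] using mkrel (GLq22Rel.r2 (q := q))
theorem rdb : zd q * zb q = q • (zb q * zd q) := by
  simpa [za, zb, zc, zd, zt, zt'] using mkrel (GLq22Rel.r3 (q := q))
theorem rdc : zd q * zc q = (-q) • (zc q * zd q) := by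
  have : zd q * zc q = -(q • (zc q * zd q)) := by
    simpa [za, zb, zc, zd, zt, zt'] using mkrel (GLq22Rel.r4 (q := q))
  rw [this]; exact (neg_smul q (zc q * zd q)).symm
theorem rcb : zc q * zb q = (-1 : ℂ) • (zb q * zc q) := by
  have : zb q * zc q = -(zc q * zb q) := by simpa [za, zb, zc, zd, zt, zt'] using mkrel (GLq22Rel.r5 (q := q))
  rw [this]; simp
theorem rda : zd q * za q = (q - q⁻¹) • (zb q * zc q) - za q * zd q := by
  have : za q * zd q + zd q * za q = (q - q⁻¹) • (zb q * zc q) := by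
    simpa [za, zb, zc, zd, zt, zt'] using mkrel (GLq22Rel.r6 (q := q))
  rw [← this]; abel
theorem rta : zt q * za q = (-1 : ℂ) • (za q * zt q) := by
  have : za q * zt q = -(zt q * za q) := by simpa [za, zb, zc, zd, zt, zt'] using mkrel (GLq22Rel.r7 (q := q))
  rw [this]; simp
theorem rtd : zt q * zd q = (-1 : ℂ) • (zd q * zt q) := by
  have : zd q * zt q = -(zt q * zd q) := by simpa [za, zb, zc, zd, zt, zt'] using mkrel (GLq22Rel.r8 (q := q))
  rw [this]; simp
theorem rtb : zt q * zb q = (-1 : ℂ) • (zb q * zt q) := by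
  have : zb q * zt q = -(zt q * zb q) := by simpa [za, zb, zc, zd, zt, zt'] using mkrel (GLq22Rel.r9 (q := q))
  rw [this]; simp
theorem rtc : zt q * zc q = (-1 : ℂ) • (zc q * zt q) := by
  have : zc q * zt q = -(zt q * zc q) := by simpa [za, zb, zc, zd, zt, zt'] using mkrel (GLq22Rel.r10 (q := q))
  rw [this]; simp
theorem rDt : zt' q * zt q = 1 := by
  simpa [za, zb, zc, zd, zt, zt'] using mkrel (GLq22Rel.r11 (q := q))
theorem rDt' : za q * (zd q * zt q) = 1 - q⁻¹ • (zb q * (zc q * zt q)) := by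
  rw [← rDt, zt']; simp [add_mul, mul_assoc]

theorem zlc {S : Type} [Ring S] [Algebra ℂ S] {X Y : S} {c : ℂ} (h : X * Y = c • (Y * X)) (W : S) :
    X * (Y * W) = c • (Y * (X * W)) := by
  rw [← mul_assoc, h, smul_mul_assoc, mul_assoc]

theorem zNice (hq : q ≠ 0) : Nice (-q) (za q) (zb q) (zA q) (zB q) (zt q) (zt' q) := by
  have lda : ∀ W, zd q * (za q * W) = (q - q⁻¹) • (zb q * (zc q * W)) - za q * (zd q * W) := by
    intro W; rw [← mul_assoc, rda, sub_mul, smul_mul_assoc, mul_assoc, mul_assoc]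
  constructor
  all_goals first | exact rba | exact rDt | skip
  all_goals simp only [zA, zB, zt', mul_assoc, smul_mul_assoc, mul_smul_comm, rba, rca, rdb, rdc,
    rcb, rda, rta, rtb, rtc, rtd, zlc rba, zlc rca, zlc rdb, zlc rdc, zlc rcb, zlc rta, zlc rtb,
    zlc rtc, zlc rtd, lda, rDt', mul_sub, sub_mul, mul_add, add_mul, smul_sub, smul_add]
  all_goals try (match_scalars <;> field_simp <;> ring)

/-- universal property -/
def liftZ {S : Type} [Ring S] [Algebra ℂ S] {a b A B t t' : S} (hq : q ≠ 0)
    (n : Nice (-q) a b A B t t') : Z q →ₐ[ℂ] S :=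
  RingQuot.liftAlgHom ℂ ⟨FreeAlgebra.lift ℂ (gimg q a b A B t t'), gimg_rel hq n⟩

section lift
variable {S : Type} [Ring S] [Algebra ℂ S] {a b A B t t' : S} (hq : q ≠ 0)
    (n : Nice (-q) a b A B t t')
theorem liftZ_a : liftZ hq n (za q) = a := by simp [liftZ, za, Zf, gimg]
theorem liftZ_b : liftZ hq n (zb q) = b := by simp [liftZ, zb, Zf, gimg]
theorem liftZ_t : liftZ hq n (zt q) = t := by simp [liftZ, zt, Zf, gimg]
theorem liftZ_A : liftZ hq n (zA q) = A := by
  simp [liftZ, zt, zA, zd, Zf, gimg, mul_assoc, n.tt']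
theorem liftZ_B : liftZ hq n (zB q) = B := by
  simp [liftZ, zt, zB, zc, Zf, gimg, mul_assoc, n.tt', smul_smul, hq]
theorem liftZ_t' : liftZ hq n (zt' q) = t' := by
  have h : liftZ hq n (zt' q) * t = 1 := by
    have := congrArg (liftZ hq n) (rDt (q := q))
    rwa [map_mul, map_one, liftZ_t] at this
  calc _ = liftZ hq n (zt' q) * (t * t') := by rw [n.tt, mul_one]
    _ = t' := by rw [← mul_assoc, h, one_mul]
end lift

theorem zc_eq (hq : q ≠ 0) : zc q = q • (zB q * zt' q) := by
  rw [zB, smul_mul_assoc, smul_smul, mul_inv_cancel₀ hq, one_smul, mul_assoc, (zNice hq).tt,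
    mul_one]
theorem zd_eq (hq : q ≠ 0) : zd q = zA q * zt' q := by
  rw [zA, mul_assoc, (zNice hq).tt, mul_one]

theorem z_induct0 {P : Z q → Prop} (hs : ∀ c : ℂ, P (algebraMap ℂ _ c))
    (hadd : ∀ x y, P x → P y → P (x + y)) (hmul : ∀ x y, P x → P y → P (x * y))
    (ha : P (za q)) (hb : P (zb q)) (hc : P (zc q)) (hd : P (zd q)) (ht : P (zt q)) (z : Z q) :
    P z := by
  obtain ⟨f, rfl⟩ := RingQuot.mkAlgHom_surjective ℂ (GLq22Rel ℂ q) z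
  induction f using FreeAlgebra.induction with
  | grade0 r => rw [AlgHom.commutes]; exact hs r
  | grade1 x => cases x <;> assumption
  | mul x y hx hy => rw [map_mul]; exact hmul _ _ hx hy
  | add x y hx hy => rw [map_add]; exact hadd _ _ hx hy

theorem z_induct (hq : q ≠ 0) {P : Z q → Prop} (hs : ∀ c : ℂ, P (algebraMap ℂ _ c))
    (hadd : ∀ x y, P x → P y → P (x + y)) (hmul : ∀ x y, P x → P y → P (x * y))
    (ha : P (za q)) (hb : P (zb q)) (hA : P (zA q)) (hB : P (zB q)) (ht : P (zt q))
    (ht' : P (zt' q)) (z : Z q) : P z := by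
  refine z_induct0 hs hadd hmul ha hb ?_ ?_ ht z
  · rw [zc_eq hq, Algebra.smul_def]
    exact hmul _ _ (hs _) (hmul _ _ hB ht')
  · rw [zd_eq hq]; exact hmul _ _ hA ht'

end gens
end Haar22

namespace Haar22
set_option linter.unusedSimpArgs false
set_option linter.unusedVariables false
set_option linter.unusedSectionVars false

section abs
variable {S : Type} [Ring S] [Algebra ℂ S] {p : ℂ} {a b A B t t' : S}

theorem comm_pow {X Y : S} {c : ℂ} (h : X * Y = c • (Y * X)) (k : ℕ) :
    X * Y ^ k = c ^ k • (Y ^ k * X) := by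
  induction k with
  | zero => simp
  | succ k ih =>
    rw [pow_succ, ← mul_assoc, ih, smul_mul_assoc, mul_assoc, h, mul_smul_comm, smul_smul,
      pow_succ, mul_assoc]

theorem pow_comm' {X Y : S} {c : ℂ} (h : X * Y = c • (Y * X)) (k : ℕ) :
    X ^ k * Y = c ^ k • (Y * X ^ k) := by
  induction k with
  | zero => simp
  | succ k ih =>
    rw [pow_succ', mul_assoc, ih, mul_smul_comm, ← mul_assoc, h, smul_mul_assoc, smul_smul,
      mul_assoc, pow_succ]

/-- integer "powers" -/
def zp (x y : S) : ℤ → S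
  | .ofNat n => x ^ n
  | .negSucc n => y ^ (n + 1)

theorem zp_nat (x y : S) (n : ℕ) : zp x y n = x ^ n := rfl
theorem zp_zero (x y : S) : zp x y 0 = 1 := by
  simpa using zp_nat x y 0
theorem zp_neg (x y : S) (n : ℕ) : zp x y (-(n : ℤ)) = y ^ n := by
  cases n with
  | zero => simp [zp_zero]
  | succ n => rfl

theorem zp_ind {P : ℤ → Prop} (h1 : ∀ n : ℕ, P n) (h2 : ∀ n : ℕ, P (-((n : ℤ) + 1))) (j : ℤ) :
    P j := by
  cases j with
  | ofNat n => exact h1 n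
  | negSucc n => have := h2 n; rwa [Int.negSucc_eq]

theorem zp_succ {x y : S} (h : x * y = 1) (j : ℤ) : x * zp x y j = zp x y (j + 1) := by
  induction j using zp_ind with
  | h1 n => 
    have : ((n : ℤ) + 1) = ((n + 1 : ℕ) : ℤ) := by push_cast; ring
    rw [this, zp_nat, zp_nat, pow_succ']
  | h2 n =>
    have : (-((n : ℤ) + 1)) + 1 = -(n : ℤ) := by ring
    have h2 : (-((n : ℤ) + 1)) = -((n + 1 : ℕ) : ℤ) := by push_cast; ring
    rw [this, h2, zp_neg, zp_neg, pow_succ', ← mul_assoc, h, one_mul]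

theorem zp_swap (x y : S) (j : ℤ) : zp x y (-j) = zp y x j := by
  induction j using zp_ind with
  | h1 n => rw [zp_neg, zp_nat]
  | h2 n => 
    have h2 : (-((n : ℤ) + 1)) = -((n + 1 : ℕ) : ℤ) := by push_cast; ring
    rw [h2, neg_neg, zp_nat, zp_neg]

theorem zp_pred {x y : S} (h : y * x = 1) (j : ℤ) : y * zp x y j = zp x y (j - 1) := by
  rw [← neg_neg j, zp_swap, zp_succ h, ← zp_swap]; congr 1; ring

theorem zp_comm {X x y : S} (h1 : x * X = -(X * x)) (h2 : y * X = -(X * y)) (j : ℤ) :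
    ∃ c : ℂ, X * zp x y j = c • (zp x y j * X) := by
  have e1 : X * x = (-1 : ℂ) • (x * X) := by rw [h1]; module
  have e2 : X * y = (-1 : ℂ) • (y * X) := by rw [h2]; module
  cases j with
  | ofNat n => exact ⟨_, comm_pow e1 n⟩
  | negSucc n => exact ⟨_, comm_pow e2 (n+1)⟩

variable (b B t t') in
/-- monomials -/
def mon (j : ℤ) (k l : ℕ) (y : S) : S := zp t t' j * (b ^ k * (B ^ l * y))

theorem mon_smul (j : ℤ) (k l : ℕ) (c : ℂ) (y : S) :
    mon b B t t' j k l (c • y) = c • mon b B t t' j k l y := by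
  simp [mon, mul_smul_comm]
theorem mon_add (j : ℤ) (k l : ℕ) (y z : S) :
    mon b B t t' j k l (y + z) = mon b B t t' j k l y + mon b B t t' j k l z := by
  simp [mon, mul_add]
theorem mon_sub (j : ℤ) (k l : ℕ) (y z : S) :
    mon b B t t' j k l (y - z) = mon b B t t' j k l y - mon b B t t' j k l z := by
  simp [mon, mul_sub]

theorem Bb_pow (n : Nice p a b A B t t') (l : ℕ) : B ^ l * b = b * B ^ l :=
  ((show Commute B b from n.Bb).pow_left l).eq
theorem Bb_pow' (n : Nice p a b A B t t') (l : ℕ) : B * b ^ l = b ^ l * B :=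
  ((show Commute B b from n.Bb).pow_right l).eq

theorem mon_bB (n : Nice p a b A B t t') (j : ℤ) (k l : ℕ) (y : S) :
    mon b B t t' j k l (b * (B * y)) = mon b B t t' j (k + 1) (l + 1) y := by
  unfold mon
  have : B ^ l * (b * (B * y)) = b * (B ^ l * (B * y)) := by
    rw [← mul_assoc, Bb_pow n, mul_assoc]
  rw [this, pow_succ, pow_succ, mul_assoc, mul_assoc]

variable (a b A B t t') in
def NN : Submodule ℂ S := Submodule.span ℂ
  {z | ∃ (j : ℤ) (k l m : ℕ), z = mon b B t t' j k l (a ^ m) ∨ z = mon b B t t' j k l (A ^ m)}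

theorem mem_a (j : ℤ) (k l m : ℕ) : mon b B t t' j k l (a ^ m) ∈ NN a b A B t t' :=
  Submodule.subset_span ⟨j, k, l, m, Or.inl rfl⟩
theorem mem_A (j : ℤ) (k l m : ℕ) : mon b B t t' j k l (A ^ m) ∈ NN a b A B t t' :=
  Submodule.subset_span ⟨j, k, l, m, Or.inr rfl⟩

theorem NN_of {X : S} (h1 : ∀ j k l m, X * mon b B t t' j k l (a ^ m) ∈ NN a b A B t t')
    (h2 : ∀ j k l m, X * mon b B t t' j k l (A ^ m) ∈ NN a b A B t t') :
    ∀ y ∈ NN a b A B t t', X * y ∈ NN a b A B t t' := by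
  intro y hy
  refine Submodule.span_induction ?_ ?_ ?_ ?_ hy
  · rintro _ ⟨j, k, l, m, rfl | rfl⟩
    · exact h1 _ _ _ _
    · exact h2 _ _ _ _
  · simp
  · intro x y _ _ hx hy; rw [mul_add]; exact Submodule.add_mem _ hx hy
  · intro c x _ hx; rw [mul_smul_comm]; exact Submodule.smul_mem _ _ hx

theorem t_mon (n : Nice p a b A B t t') (j : ℤ) (k l : ℕ) (y : S) :
    t * mon b B t t' j k l y = mon b B t t' (j + 1) k l y := by
  unfold mon; rw [← mul_assoc, zp_succ n.tt]
theorem t'_mon (n : Nice p a b A B t t') (j : ℤ) (k l : ℕ) (y : S) :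
    t' * mon b B t t' j k l y = mon b B t t' (j - 1) k l y := by
  unfold mon; rw [← mul_assoc, zp_pred n.tt']
theorem b_mon (n : Nice p a b A B t t') (j : ℤ) (k l : ℕ) : ∃ c : ℂ, ∀ y : S,
    b * mon b B t t' j k l y = c • mon b B t t' j (k + 1) l y := by
  obtain ⟨c, hc⟩ := zp_comm n.tb n.t'b j
  refine ⟨c, fun y => ?_⟩
  unfold mon; rw [← mul_assoc, hc, smul_mul_assoc, mul_assoc, pow_succ', mul_assoc]
theorem B_mon (n : Nice p a b A B t t') (j : ℤ) (k l : ℕ) : ∃ c : ℂ, ∀ y : S,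
    B * mon b B t t' j k l y = c • mon b B t t' j k (l + 1) y := by
  obtain ⟨c, hc⟩ := zp_comm n.tB n.t'B j
  refine ⟨c, fun y => ?_⟩
  unfold mon; rw [← mul_assoc, hc, smul_mul_assoc, mul_assoc, ← mul_assoc B, Bb_pow' n, mul_assoc,
    ← mul_assoc B, pow_succ']
theorem inv_comm {X Y : S} (hp : p ≠ 0) (h : X * Y = p • (Y * X)) : Y * X = p⁻¹ • (X * Y) := by
  rw [h, smul_smul, inv_mul_cancel₀ hp, one_smul]
theorem gen_mon {X : S} {r s : ℂ} (h1 : t * X = -(X * t)) (h2 : t' * X = -(X * t'))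
    (hb : X * b = r • (b * X)) (hB : X * B = s • (B * X)) (j : ℤ) (k l : ℕ) : ∃ c : ℂ, ∀ y : S,
    X * mon b B t t' j k l y = c • mon b B t t' j k l (X * y) := by
  obtain ⟨c, hc⟩ := zp_comm h1 h2 j
  refine ⟨c * (r ^ k * s ^ l), fun y => ?_⟩
  unfold mon
  rw [← mul_assoc, hc, smul_mul_assoc, mul_assoc, ← mul_assoc X, comm_pow hb, smul_mul_assoc,
    mul_assoc, ← mul_assoc X, comm_pow hB, smul_mul_assoc, mul_assoc]
  simp only [mul_smul_comm, smul_smul, mul_assoc]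

theorem aA_pow (n : Nice p a b A B t t') (m : ℕ) : a * A ^ (m + 1) = A ^ m - b * (B * A ^ m) := by
  rw [pow_succ', ← mul_assoc, n.aA, sub_mul, one_mul, mul_assoc]
theorem Aa_pow (n : Nice p a b A B t t') (m : ℕ) :
    A * a ^ (m + 1) = a ^ m - (p * p) • (b * (B * a ^ m)) := by
  rw [pow_succ', ← mul_assoc, n.Aa, sub_mul, one_mul, smul_mul_assoc, mul_assoc]

theorem NN_t (n : Nice p a b A B t t') : ∀ y ∈ NN a b A B t t', t * y ∈ NN a b A B t t' :=
  NN_of (fun _ _ _ _ => by rw [t_mon n]; exact mem_a _ _ _ _)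
    (fun _ _ _ _ => by rw [t_mon n]; exact mem_A _ _ _ _)
theorem NN_t' (n : Nice p a b A B t t') : ∀ y ∈ NN a b A B t t', t' * y ∈ NN a b A B t t' :=
  NN_of (fun _ _ _ _ => by rw [t'_mon n]; exact mem_a _ _ _ _)
    (fun _ _ _ _ => by rw [t'_mon n]; exact mem_A _ _ _ _)
theorem NN_b (n : Nice p a b A B t t') : ∀ y ∈ NN a b A B t t', b * y ∈ NN a b A B t t' :=
  NN_of (fun j k l m => by
      obtain ⟨c, hc⟩ := b_mon n j k l
      rw [hc]; exact Submodule.smul_mem _ _ (mem_a _ _ _ _))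
    (fun j k l m => by
      obtain ⟨c, hc⟩ := b_mon n j k l
      rw [hc]; exact Submodule.smul_mem _ _ (mem_A _ _ _ _))
theorem NN_B (n : Nice p a b A B t t') : ∀ y ∈ NN a b A B t t', B * y ∈ NN a b A B t t' :=
  NN_of (fun j k l m => by
      obtain ⟨c, hc⟩ := B_mon n j k l
      rw [hc]; exact Submodule.smul_mem _ _ (mem_a _ _ _ _))
    (fun j k l m => by
      obtain ⟨c, hc⟩ := B_mon n j k l
      rw [hc]; exact Submodule.smul_mem _ _ (mem_A _ _ _ _))
theorem NN_a (hp : p ≠ 0) (n : Nice p a b A B t t') :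
    ∀ y ∈ NN a b A B t t', a * y ∈ NN a b A B t t' :=
  NN_of (fun j k l m => by
      obtain ⟨c, hc⟩ := gen_mon n.ta n.t'a (inv_comm hp n.ba) (inv_comm hp n.Ba) j k l
      rw [hc, ← pow_succ']; exact Submodule.smul_mem _ _ (mem_a _ _ _ _))
    (fun j k l m => by
      obtain ⟨c, hc⟩ := gen_mon n.ta n.t'a (inv_comm hp n.ba) (inv_comm hp n.Ba) j k l
      rw [hc]; apply Submodule.smul_mem
      cases m with
      | zero => simpa using mem_a (a := a) (A := A) j k l 1
      | succ m => 
        rw [aA_pow n, mon_sub, mon_bB n]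
        exact Submodule.sub_mem _ (mem_A _ _ _ _) (mem_A _ _ _ _))
theorem NN_A (hp : p ≠ 0) (n : Nice p a b A B t t') :
    ∀ y ∈ NN a b A B t t', A * y ∈ NN a b A B t t' :=
  NN_of (fun j k l m => by
      obtain ⟨c, hc⟩ := gen_mon n.tA n.t'A n.Ab n.AB j k l
      rw [hc]; apply Submodule.smul_mem
      cases m with
      | zero => simpa using mem_A (a := a) (A := A) j k l 1
      | succ m => 
        rw [Aa_pow n, mon_sub, mon_smul, mon_bB n]
        exact Submodule.sub_mem _ (mem_a _ _ _ _) (Submodule.smul_mem _ _ (mem_a _ _ _ _)))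
    (fun j k l m => by
      obtain ⟨c, hc⟩ := gen_mon n.tA n.t'A n.Ab n.AB j k l
      rw [hc, ← pow_succ']; exact Submodule.smul_mem _ _ (mem_A _ _ _ _))

/-- twisted derivation -/
structure Der (p : ℂ) (a b A B t t' : S) (R th : S →ₗ[ℂ] S) : Prop where
  R_mul : ∀ x y, R (x * y) = x * R y + R x * th y
  th_mul : ∀ x y, th (x * y) = th x * th y
  R_one : R 1 = 0
  th_one : th 1 = 1
  Ra : R a = 0
  Rb : R b = a
  RA : R A = (-p) • B
  RB : R B = 0
  Rt : R t = 0
  Rt' : R t' = 0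
  tha : th a = p • a
  thb : th b = p⁻¹ • b
  thA : th A = p⁻¹ • A
  thB : th B = p • B

variable {R th : S →ₗ[ℂ] S}

theorem R_pow0 (d : Der p a b A B t t' R th) {x : S} (h : R x = 0) (k : ℕ) : R (x ^ k) = 0 := by
  induction k with
  | zero => simpa using d.R_one
  | succ k ih => rw [pow_succ, d.R_mul, h, ih]; simp

theorem th_pow (d : Der p a b A B t t' R th) {x : S} {c : ℂ} (h : th x = c • x) (k : ℕ) :
    th (x ^ k) = c ^ k • x ^ k := by
  induction k with
  | zero => simpa using d.th_one
  | succ k ih => rw [pow_succ, d.th_mul, h, ih, smul_mul_smul_comm, pow_succ]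

theorem R_zp (d : Der p a b A B t t' R th) (j : ℤ) : R (zp t t' j) = 0 := by
  cases j with
  | ofNat n => exact R_pow0 d d.Rt n
  | negSucc n => exact R_pow0 d d.Rt' (n+1)

def cc (p : ℂ) (k : ℕ) : ℂ := ∑ i ∈ Finset.range k, (p⁻¹ * p⁻¹) ^ i

theorem R_b_pow (hp : p ≠ 0) (n : Nice p a b A B t t') (d : Der p a b A B t t' R th) (k : ℕ) :
    R (b ^ (k + 1)) = cc p (k + 1) • (b ^ k * a) := by
  induction k with
  | zero => simp [d.Rb, cc]
  | succ k ih =>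
    rw [pow_succ', d.R_mul, ih, d.Rb, th_pow d d.thb, mul_smul_comm, mul_smul_comm,
      comm_pow (inv_comm hp n.ba), smul_smul, ← mul_assoc, ← pow_succ', ← add_smul]
    congr 1
    simp only [cc]
    rw [Finset.sum_range_succ _ (k+1), mul_pow]

theorem R_A_pow (hp : p ≠ 0) (n : Nice p a b A B t t') (d : Der p a b A B t t' R th) (k : ℕ) :
    R (A ^ (k + 1)) = (-(p ^ (k + 1) * cc p (k + 1))) • (B * A ^ k) := by
  induction k with
  | zero => simp [d.RA, cc]
  | succ k ih =>
    rw [pow_succ', d.R_mul, ih, d.RA, th_pow d d.thA, mul_smul_comm, smul_mul_smul_comm,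
      ← mul_assoc, n.AB, smul_mul_assoc, mul_assoc, ← pow_succ', smul_smul, ← add_smul]
    congr 1
    simp only [cc]
    rw [Finset.sum_range_succ _ (k+1)]
    generalize ∑ i ∈ Finset.range (k+1), (p⁻¹ * p⁻¹) ^ i = s
    simp only [mul_pow, inv_pow]
    field_simp
    ring

theorem R_mon_succ (hp : p ≠ 0) (n : Nice p a b A B t t') (d : Der p a b A B t t' R th) (j : ℤ)
    (k l : ℕ) (y : S) : R (mon b B t t' j (k + 1) l y) = mon b B t t' j (k + 1) l (R y) +
      cc p (k + 1) • mon b B t t' j k l (a * th y) := by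
  unfold mon
  rw [d.R_mul, d.R_mul, d.R_mul, R_zp d, R_b_pow hp n d, R_pow0 d d.RB, zero_mul, zero_mul,
    add_zero, add_zero, d.th_mul, th_pow d d.thB, mul_add]
  congr 1
  have h2 : ∀ W, a * (B ^ l * W) = p⁻¹ ^ l • (B ^ l * (a * W)) := by
    intro W
    rw [← mul_assoc a, comm_pow (inv_comm hp n.Ba), smul_mul_assoc, mul_assoc]
  simp only [smul_mul_assoc, mul_smul_comm, smul_smul, mul_assoc, h2]
  congr 1
  rw [inv_pow]
  field_simp

theorem R_mon_zero (d : Der p a b A B t t' R th) (j : ℤ)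
    (l : ℕ) (y : S) : R (mon b B t t' j 0 l y) = mon b B t t' j 0 l (R y) := by
  unfold mon
  rw [d.R_mul, d.R_mul, d.R_mul, R_zp d, R_pow0 d d.RB, pow_zero, d.R_one]
  simp

theorem mon_B (j : ℤ) (k l : ℕ) (y : S) :
    mon b B t t' j k l (B * y) = mon b B t t' j k (l + 1) y := by
  unfold mon; rw [pow_succ, mul_assoc]

theorem R_ma_succ (hp : p ≠ 0) (n : Nice p a b A B t t') (d : Der p a b A B t t' R th) (j : ℤ)
    (k l m : ℕ) : R (mon b B t t' j (k + 1) l (a ^ m)) =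
      (cc p (k + 1) * p ^ m) • mon b B t t' j k l (a ^ (m + 1)) := by
  rw [R_mon_succ hp n d, R_pow0 d d.Ra, th_pow d d.tha, mul_smul_comm, mon_smul, smul_smul,
    ← pow_succ']
  simp [mon]
theorem R_ma_zero (d : Der p a b A B t t' R th) (j : ℤ)
    (l m : ℕ) : R (mon b B t t' j 0 l (a ^ m)) = 0 := by
  rw [R_mon_zero d, R_pow0 d d.Ra]
  simp [mon]
theorem R_mA_succ (hp : p ≠ 0) (n : Nice p a b A B t t') (d : Der p a b A B t t' R th) (j : ℤ)
    (k l m : ℕ) : R (mon b B t t' j (k + 1) l (A ^ (m + 1))) =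
      (-(p ^ (m + 1) * cc p (m + 1) + p⁻¹ ^ (m + 1) * cc p (k + 1))) •
        mon b B t t' j (k + 1) (l + 1) (A ^ m) +
      (p⁻¹ ^ (m + 1) * cc p (k + 1)) • mon b B t t' j k l (A ^ m) := by
  rw [R_mon_succ hp n d, R_A_pow hp n d, th_pow d d.thA, mul_smul_comm, mon_smul, mon_smul,
    mon_B, aA_pow n, mon_sub, mon_bB n]
  module
theorem R_mA_zero (hp : p ≠ 0) (n : Nice p a b A B t t') (d : Der p a b A B t t' R th) (j : ℤ)
    (l m : ℕ) : R (mon b B t t' j 0 l (A ^ (m + 1))) =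
      (-(p ^ (m + 1) * cc p (m + 1))) • mon b B t t' j 0 (l + 1) (A ^ m) := by
  rw [R_mon_zero d, R_A_pow hp n d, mon_smul, mon_B]

end abs
end Haar22

namespace Haar22
set_option linter.unusedSimpArgs false
set_option linter.unusedVariables false
set_option linter.unusedSectionVars false

section abs
variable {S : Type} [Ring S] [Algebra ℂ S] {p : ℂ} {a b A B t t' : S}

theorem Nice.scale (n : Nice p a b A B t t') {u v w : ℂ} (hu : u ≠ 0) (hv : v ≠ 0) (hw : w ≠ 0) :
    Nice p (u • a) (v • b) (u⁻¹ • A) (v⁻¹ • B) (w • t) (w⁻¹ • t') := by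
  constructor <;> simp only [smul_mul_smul_comm, n.ba, n.Ba, n.Ab, n.AB, n.Bb, n.aA, n.Aa, n.ta,
    n.tb, n.tA, n.tB, n.tt, n.tt', mul_inv_cancel₀ hu, inv_mul_cancel₀ hu, mul_inv_cancel₀ hv,
    inv_mul_cancel₀ hv, mul_inv_cancel₀ hw, inv_mul_cancel₀ hw, one_smul]
  all_goals module

theorem Nice.mat (hp : p ≠ 0) (n : Nice p a b A B t t') :
    Nice p (!![a, 0; 0, p • a] : Matrix (Fin 2) (Fin 2) S) !![b, a; 0, p⁻¹ • b]
      !![A, (-p) • B; 0, p⁻¹ • A] !![B, 0; 0, p • B] !![t, 0; 0, t] !![t', 0; 0, t'] := by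
  constructor <;> ext i j <;> fin_cases i <;> fin_cases j <;>
    simp [n.ba, n.Ba, n.Ab, n.AB, n.Bb, n.aA, n.Aa, n.ta,
    n.tb, n.tA, n.tB, n.tt, n.tt', smul_smul, hp, Matrix.mul_apply, Fin.sum_univ_two, Matrix.one_apply, smul_sub, smul_add, -neg_smul]
  all_goals try (match_scalars <;> field_simp <;> ring)
end abs

abbrev FF := ℤ → ℕ → ℕ → ℤ → ℂ

def opa : Module.End ℂ FF where
  toFun F j k l m := F j k l (m + 1)
  map_add' _ _ := rfl
  map_smul' _ _ := rfl
def opb (p : ℂ) : Module.End ℂ FF where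
  toFun F j k l m := p ^ (-m) * F j (k + 1) l m
  map_add' F G := by ext; simp [mul_add]
  map_smul' c F := by ext; simp; ring
def opB (p : ℂ) : Module.End ℂ FF where
  toFun F j k l m := p ^ (-m) * F j k (l + 1) m
  map_add' F G := by ext; simp [mul_add]
  map_smul' c F := by ext; simp; ring
def opA (p : ℂ) : Module.End ℂ FF where
  toFun F j k l m := F j k l (m - 1) - p ^ (-m) * p ^ (-m) * p ^ 2 * F j (k + 1) (l + 1) (m - 1)
  map_add' F G := by ext; simp; ring
  map_smul' c F := by ext; simp; ring
def opt : Module.End ℂ FF where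
  toFun F j k l m := (-1) ^ k * (-1) ^ l * (-1) ^ m * F (j + 1) k l m
  map_add' F G := by ext; simp; ring
  map_smul' c F := by ext; simp; ring
def opt' : Module.End ℂ FF where
  toFun F j k l m := (-1) ^ k * (-1) ^ l * (-1) ^ m * F (j - 1) k l m
  map_add' F G := by ext; simp; ring
  map_smul' c F := by ext; simp; ring

theorem opNice {p : ℂ} (hp : p ≠ 0) : Nice p opa (opb p) (opA p) (opB p) opt opt' := by
  have hm : (-1 : ℂ) ≠ 0 := by norm_num
  constructor <;> ext F j k l m <;>
    simp [opa, opb, opB, opA, opt, opt', zpow_add₀ hp, zpow_sub₀ hp, zpow_add₀ hm, zpow_sub₀ hm, pow_succ]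
  all_goals try field_simp
  all_goals try ring
  all_goals
    have h3 : ((-1 : ℂ) ^ m) ^ 2 = 1 := by rw [pow_two, ← mul_zpow]; simp
    have h1 : ((-1 : ℂ) ^ k) * (-1) ^ k = 1 := by rw [← mul_pow]; simp
    have h2 : ((-1 : ℂ) ^ l) * (-1) ^ l = 1 := by rw [← mul_pow]; simp
    linear_combination (((-1:ℂ)^m)^2 * ((-1)^l*(-1)^l) * F j k l m) * h1 + (((-1:ℂ)^m)^2 * F j k l m)*h2 + F j k l m * h3
end Haar22

namespace Haar22
set_option linter.unusedSimpArgs false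
set_option linter.unusedVariables false
set_option linter.unusedSectionVars false

section
variable {q : ℂ} (hq : q ≠ 0)

def Tt {u v w : ℂ} (hu : u ≠ 0) (hv : v ≠ 0) (hw : w ≠ 0) : Z q →ₐ[ℂ] Z q :=
  liftZ hq ((zNice hq).scale hu hv hw)

def Phi : Z q →ₐ[ℂ] Matrix (Fin 2) (Fin 2) (Z q) :=
  liftZ hq ((zNice hq).mat (neg_ne_zero.2 hq))

def rho : Z q →ₐ[ℂ] Module.End ℂ FF := liftZ hq (opNice (neg_ne_zero.2 hq))

def Rr : Z q →ₗ[ℂ] Z q := Matrix.entryLinearMap ℂ (Z q) 0 1 ∘ₗ (Phi hq).toLinearMap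
def th : Z q →ₗ[ℂ] Z q := Matrix.entryLinearMap ℂ (Z q) 1 1 ∘ₗ (Phi hq).toLinearMap

theorem Rr_apply (z : Z q) : Rr hq z = Phi hq z 0 1 := rfl
theorem th_apply (z : Z q) : th hq z = Phi hq z 1 1 := rfl

theorem Phi_entries (z : Z q) : Phi hq z 0 0 = z ∧ Phi hq z 1 0 = 0 := by
  induction z using z_induct hq with
  | hs c => simp [Matrix.algebraMap_matrix_apply]
  | hadd x y hx hy => simp [hx, hy]
  | hmul x y hx hy => simp [Matrix.mul_apply, hx, hy]
  | ha => simp [Phi, liftZ_a]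
  | hb => simp [Phi, liftZ_b]
  | hA => simp [Phi, liftZ_A]
  | hB => simp [Phi, liftZ_B]
  | ht => simp [Phi, liftZ_t]
  | ht' => simp [Phi, liftZ_t']

theorem zDer : Der (-q) (za q) (zb q) (zA q) (zB q) (zt q) (zt' q) (Rr hq) (th hq) := by
  constructor
  · intro x y; simp [Rr_apply, th_apply, Matrix.mul_apply, Phi_entries]
  · intro x y; simp [Rr_apply, th_apply, Matrix.mul_apply, Phi_entries]
  all_goals simp [Rr_apply, th_apply, Phi, liftZ_a, liftZ_b, liftZ_A, liftZ_B, liftZ_t, liftZ_t']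

theorem z_mem_NN {q : ℂ} (hq : q ≠ 0) (z : Z q) : z ∈ NN (za q) (zb q) (zA q) (zB q) (zt q) (zt' q) := by
  have hp := neg_ne_zero.2 hq
  have n := zNice hq
  suffices h : ∀ y ∈ NN (za q) (zb q) (zA q) (zB q) (zt q) (zt' q),
      z * y ∈ NN (za q) (zb q) (zA q) (zB q) (zt q) (zt' q) by
    have h1 := h 1 (by
      have := mem_a (a := za q) (A := zA q) (b := zb q) (B := zB q) (t := zt q) (t' := zt' q) 0 0 0 0
      simpa [mon, zp_zero] using this)
    rwa [mul_one] at h1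
  induction z using z_induct hq with
  | hs c =>
    intro y hy
    rw [← Algebra.smul_def]; exact Submodule.smul_mem _ _ hy
  | hadd x y hx hy =>
    intro w hw
    rw [add_mul]; exact Submodule.add_mem _ (hx w hw) (hy w hw)
  | hmul x y hx hy =>
    intro w hw
    rw [mul_assoc]; exact hx _ (hy _ hw)
  | ha => exact NN_a hp n
  | hb => exact NN_b n
  | hA => exact NN_A hp n
  | hB => exact NN_B n
  | ht => exact NN_t n
  | ht' => exact NN_t' n

/-- q-integers -/
def qn (q : ℂ) (k : ℕ) : ℂ := ∑ i ∈ Finset.range k, (q * q) ^ i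

def HH (q : ℂ) : FF := fun j k l m => if j = 0 ∧ k = l ∧ m = 0 then (qn q (k + 1))⁻¹ else 0

def haar : Z q →ₗ[ℂ] ℂ where
  toFun z := rho hq z (HH q) 0 0 0 0
  map_add' x y := by simp
  map_smul' c x := by simp

theorem haar_apply (z : Z q) : haar hq z = rho hq z (HH q) 0 0 0 0 := rfl

theorem haar_one : haar hq 1 = 1 := by
  simp [haar_apply, HH, qn]

section T
variable {u v w : ℂ} (hu : u ≠ 0) (hv : v ≠ 0) (hw : w ≠ 0)

theorem Tt_a : Tt hq hu hv hw (za q) = u • za q := liftZ_a _ _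
theorem Tt_b : Tt hq hu hv hw (zb q) = v • zb q := liftZ_b _ _
theorem Tt_A : Tt hq hu hv hw (zA q) = u⁻¹ • zA q := liftZ_A _ _
theorem Tt_B : Tt hq hu hv hw (zB q) = v⁻¹ • zB q := liftZ_B _ _
theorem Tt_t : Tt hq hu hv hw (zt q) = w • zt q := liftZ_t _ _
theorem Tt_t' : Tt hq hu hv hw (zt' q) = w⁻¹ • zt' q := liftZ_t' _ _

def SS (u v w : ℂ) : Module.End ℂ FF where
  toFun F j k l m := u ^ (-m) * v ^ ((l : ℤ) - (k : ℤ)) * w ^ (-j) * F j k l m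
  map_add' F G := by ext; simp; ring
  map_smul' c F := by ext; simp; ring

theorem rho_T (z : Z q) : rho hq (Tt hq hu hv hw z) * SS u v w = SS u v w * rho hq z := by
  have hp := neg_ne_zero.2 hq
  induction z using z_induct hq with
  | hs c => simp [Algebra.algebraMap_eq_smul_one]
  | hadd x y hx hy => rw [map_add, map_add, map_add, add_mul, mul_add, hx, hy]
  | hmul x y hx hy => rw [map_mul, map_mul, map_mul, mul_assoc, hy, ← mul_assoc, hx, mul_assoc]
  | ha => rw [Tt_a, map_smul, rho, liftZ_a]; ext F j k l m; simp [SS, opa, zpow_add₀ hu]; field_simp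
  | hb =>
    rw [Tt_b, map_smul, rho, liftZ_b]; ext F j k l m
    simp [SS, opb, zpow_add₀ hv, zpow_sub₀ hv]; field_simp; ring
  | hA =>
    rw [Tt_A, map_smul, rho, liftZ_A]; ext F j k l m
    simp [SS, opA, zpow_add₀ hv, zpow_sub₀ hv, zpow_add₀ hu, zpow_sub₀ hu]; field_simp; ring
  | hB =>
    rw [Tt_B, map_smul, rho, liftZ_B]; ext F j k l m
    simp [SS, opB, zpow_add₀ hv, zpow_sub₀ hv]; field_simp; ring
  | ht =>
    rw [Tt_t, map_smul, rho, liftZ_t]; ext F j k l m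
    simp [SS, opt, zpow_add₀ hw, zpow_sub₀ hw]; field_simp
  | ht' =>
    rw [Tt_t', map_smul, rho, liftZ_t']; ext F j k l m
    simp [SS, opt', zpow_add₀ hw, zpow_sub₀ hw]; field_simp

theorem SS_H : SS u v w (HH q) = HH q := by
  ext j k l m
  simp only [SS, HH, LinearMap.coe_mk, AddHom.coe_mk]
  split_ifs with h
  · obtain ⟨rfl, rfl, rfl⟩ := h; simp
  · simp

theorem haar_T (z : Z q) : haar hq (Tt hq hu hv hw z) = haar hq z := by
  rw [haar_apply, haar_apply]
  have := congrArg (fun f : Module.End ℂ FF => f (HH q) 0 0 0 0) (rho_T hq hu hv hw z)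
  simp only [Module.End.mul_apply] at this
  rw [SS_H] at this
  rw [this]; simp [SS]

end T

theorem opb_pow (p : ℂ) (n : ℕ) (F : FF) (j : ℤ) (k l : ℕ) :
    ((opb p) ^ n) F j k l 0 = F j (k + n) l 0 := by
  induction n generalizing k with
  | zero => simp
  | succ n ih => rw [pow_succ', Module.End.mul_apply]; simp only [opb, LinearMap.coe_mk, AddHom.coe_mk] at *; rw [ih]; simp; congr 1; ring
theorem opB_pow (p : ℂ) (n : ℕ) (F : FF) (j : ℤ) (k l : ℕ) :
    ((opB p) ^ n) F j k l 0 = F j k (l + n) 0 := by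
  induction n generalizing l with
  | zero => simp
  | succ n ih => rw [pow_succ', Module.End.mul_apply]; simp only [opB, LinearMap.coe_mk, AddHom.coe_mk] at *; rw [ih]; simp; congr 1; ring

theorem haar_bB (k : ℕ) : haar hq (zb q ^ k * zB q ^ k) = (qn q (k + 1))⁻¹ := by
  rw [haar_apply, map_mul, map_pow, map_pow, rho, liftZ_b, liftZ_B, Module.End.mul_apply, opb_pow,
    opB_pow]
  simp [HH]

end
end Haar22

namespace Haar22
set_option linter.unusedSimpArgs false
set_option linter.unusedVariables false
set_option linter.unusedSectionVars false

section
variable {S : Type} [Ring S] [Algebra ℂ S] (T : S →ₐ[ℂ] S)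

theorem T_pow {x : S} {c : ℂ} (h : T x = c • x) (k : ℕ) : T (x ^ k) = c ^ k • x ^ k := by
  rw [map_pow, h, smul_pow]

theorem T_zp {x y : S} {c : ℂ} (hx : T x = c • x) (hy : T y = c⁻¹ • y) (j : ℤ) :
    T (zp x y j) = c ^ j • zp x y j := by
  cases j with
  | ofNat n => 
    have := T_pow T hx n
    simpa [zp] using this
  | negSucc n =>
    have := T_pow T hy (n + 1)
    rw [zpow_negSucc, ← inv_pow]
    exact this

theorem T_mon {b B t t' y : S} {v w s : ℂ} (hb : T b = v • b) (hB : T B = v⁻¹ • B)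
    (ht : T t = w • t) (ht' : T t' = w⁻¹ • t') (hy : T y = s • y) (j : ℤ) (k l : ℕ) :
    T (mon b B t t' j k l y) = (w ^ j * v ^ k * v⁻¹ ^ l * s) • mon b B t t' j k l y := by
  unfold mon
  rw [map_mul, map_mul, map_mul, T_zp T ht ht', T_pow T hb, T_pow T hB, hy]
  simp only [smul_mul_assoc, mul_smul_comm, smul_smul]
  congr 1; ring
end

section
variable {q : ℂ} (hq : q ≠ 0) {u v w : ℂ} (hu : u ≠ 0) (hv : v ≠ 0) (hw : w ≠ 0)

abbrev M (q : ℂ) (j : ℤ) (k l : ℕ) (y : Z q) : Z q := mon (zb q) (zB q) (zt q) (zt' q) j k l y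

theorem Tt_Ma (j : ℤ) (k l m : ℕ) : Tt hq hu hv hw (M q j k l (za q ^ m)) =
    (w ^ j * v ^ k * v⁻¹ ^ l * u ^ m) • M q j k l (za q ^ m) :=
  T_mon _ (Tt_b hq hu hv hw) (Tt_B hq hu hv hw) (Tt_t hq hu hv hw) (Tt_t' hq hu hv hw)
    (T_pow _ (Tt_a hq hu hv hw) m) j k l
theorem Tt_MA (j : ℤ) (k l m : ℕ) : Tt hq hu hv hw (M q j k l (zA q ^ m)) =
    (w ^ j * v ^ k * v⁻¹ ^ l * u⁻¹ ^ m) • M q j k l (zA q ^ m) :=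
  T_mon _ (Tt_b hq hu hv hw) (Tt_B hq hu hv hw) (Tt_t hq hu hv hw) (Tt_t' hq hu hv hw)
    (T_pow _ (Tt_A hq hu hv hw) m) j k l

theorem haar_eig {z : Z q} {c : ℂ} (h : Tt hq hu hv hw z = c • z) (hc : c ≠ 1) : haar hq z = 0 := by
  have := haar_T hq hu hv hw z
  rw [h, map_smul, smul_eq_mul] at this
  have h2 : (c - 1) * haar hq z = 0 := by linear_combination this
  exact (mul_eq_zero.1 h2).resolve_left (sub_ne_zero.2 hc)

theorem two_zpow {j : ℤ} (h : j ≠ 0) : (2 : ℂ) ^ j ≠ 1 := by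
  intro e
  apply h
  have : ((2 : ℝ) ^ j) = 1 := by simpa using congrArg norm e
  exact (zpow_eq_one_iff_right₀ (by norm_num) (by norm_num)).1 this

theorem two_kl {k l : ℕ} (h : k ≠ l) : (2 : ℂ) ^ k * 2⁻¹ ^ l ≠ 1 := by
  have := two_zpow (j := (k : ℤ) - l) (by omega)
  rwa [zpow_sub₀ (by norm_num), zpow_natCast, zpow_natCast, div_eq_mul_inv, ← inv_pow] at this

theorem two_pow {m : ℕ} (h : m ≠ 0) : (2 : ℂ) ^ m ≠ 1 := by
  have := two_zpow (j := (m : ℤ)) (by omega)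
  rwa [zpow_natCast] at this

theorem haar_Ma {j : ℤ} {k l m : ℕ} (h : ¬ (j = 0 ∧ k = l ∧ m = 0)) :
    haar hq (M q j k l (za q ^ m)) = 0 := by
  have h2 : (2 : ℂ) ≠ 0 := two_ne_zero
  by_cases hj : j = 0
  · by_cases hk : k = l
    · have hm : m ≠ 0 := fun e => h ⟨hj, hk, e⟩
      refine haar_eig hq h2 one_ne_zero one_ne_zero (Tt_Ma _ _ _ _ _ _ _ _) ?_
      simpa using two_pow hm
    · refine haar_eig hq one_ne_zero h2 one_ne_zero (Tt_Ma _ _ _ _ _ _ _ _) ?_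
      simpa only [one_pow, mul_one, one_zpow, one_mul] using two_kl hk
  · refine haar_eig hq one_ne_zero one_ne_zero h2 (Tt_Ma _ _ _ _ _ _ _ _) ?_
    simpa using two_zpow hj

theorem haar_MA {j : ℤ} {k l m : ℕ} (h : ¬ (j = 0 ∧ k = l ∧ m = 0)) :
    haar hq (M q j k l (zA q ^ m)) = 0 := by
  have h2 : (2 : ℂ) ≠ 0 := two_ne_zero
  by_cases hj : j = 0
  · by_cases hk : k = l
    · have hm : m ≠ 0 := fun e => h ⟨hj, hk, e⟩
      refine haar_eig hq h2 one_ne_zero one_ne_zero (Tt_MA _ _ _ _ _ _ _ _) ?_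
      simpa using two_pow hm
    · refine haar_eig hq one_ne_zero h2 one_ne_zero (Tt_MA _ _ _ _ _ _ _ _) ?_
      simpa only [one_pow, mul_one, one_zpow, one_mul, inv_one] using two_kl hk
  · refine haar_eig hq one_ne_zero one_ne_zero h2 (Tt_MA _ _ _ _ _ _ _ _) ?_
    simpa using two_zpow hj

theorem haar_M0 (k : ℕ) : haar hq (M q 0 k k (zA q ^ 0)) = (qn q (k + 1))⁻¹ := by
  rw [← haar_bB hq]; simp [mon, zp_zero]
end

theorem gs_pos {r : ℝ} (hr : 0 ≤ r) (k : ℕ) : 0 < ∑ i ∈ Finset.range (k + 1), r ^ i := by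
  rw [Finset.sum_range_succ']
  have : 0 ≤ ∑ i ∈ Finset.range k, r ^ (i + 1) := Finset.sum_nonneg fun i _ => by positivity
  simp only [pow_zero]; linarith

section real
variable {q : ℝ} (hq : (q : ℂ) ≠ 0)

theorem qn_real (k : ℕ) : qn (q : ℂ) k = ((∑ i ∈ Finset.range k, (q * q) ^ i : ℝ) : ℂ) := by
  simp [qn]
theorem cc_real (k : ℕ) : cc (-(q : ℂ)) k = ((∑ i ∈ Finset.range k, (q⁻¹ * q⁻¹) ^ i : ℝ) : ℂ) := by
  simp only [cc]; push_cast
  refine Finset.sum_congr rfl fun i _ => ?_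
  congr 1; rw [inv_neg]; ring

theorem qn_ne (q : ℝ) (k : ℕ) : qn (q : ℂ) (k + 1) ≠ 0 := by
  rw [qn_real]; exact_mod_cast (gs_pos (mul_self_nonneg q) k).ne'
theorem cc_ne (q : ℝ) (k : ℕ) : cc (-(q : ℂ)) (k + 1) ≠ 0 := by
  rw [cc_real]; exact_mod_cast (gs_pos (mul_self_nonneg q⁻¹) k).ne'

theorem cc_succ (p : ℂ) (k : ℕ) : cc p (k + 1) = 1 + p⁻¹ * p⁻¹ * cc p k := by
  simp only [cc]; rw [Finset.sum_range_succ', Finset.mul_sum]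
  simp only [pow_succ', pow_zero]; rw [add_comm]

theorem qn_cc {q : ℂ} (hq : q ≠ 0) (k : ℕ) : qn q (k + 1) = (q * q) ^ k * cc (-q) (k + 1) := by
  induction k with
  | zero => simp [qn, cc]
  | succ k ih =>
    have h1 : qn q (k + 1 + 1) = qn q (k + 1) + (q * q) ^ (k + 1) := Finset.sum_range_succ _ _
    rw [h1, ih, cc_succ _ (k + 1), inv_neg]
    field_simp
    ring

theorem co_ne (q : ℝ) (hq : (q : ℂ) ≠ 0) (m k : ℕ) :
    (-((-(q : ℂ)) ^ (m + 1) * cc (-(q : ℂ)) (m + 1) + (-(q : ℂ))⁻¹ ^ (m + 1) * cc (-(q : ℂ)) (k + 1))) ≠ 0 := by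
  have hr : q ≠ 0 := by exact_mod_cast hq
  have : (-((-(q : ℂ)) ^ (m + 1) * cc (-(q : ℂ)) (m + 1) + (-(q : ℂ))⁻¹ ^ (m + 1) * cc (-(q : ℂ)) (k + 1)))
     = -(-(q : ℂ)) ^ (m + 1) * ((∑ i ∈ Finset.range (m + 1), (q⁻¹ * q⁻¹) ^ i +
        (q⁻¹ * q⁻¹) ^ (m + 1) * ∑ i ∈ Finset.range (k + 1), (q⁻¹ * q⁻¹) ^ i : ℝ) : ℂ) := by
    rw [Complex.ofReal_add, Complex.ofReal_mul, ← cc_real, ← cc_real]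
    have : (((q⁻¹ * q⁻¹) ^ (m + 1) : ℝ) : ℂ) = (-(q : ℂ))⁻¹ ^ (m + 1) * (-(q : ℂ))⁻¹ ^ (m + 1) := by
      push_cast; rw [← mul_pow, inv_neg]; ring
    rw [this]
    have h2 : (-(q : ℂ)) ^ (m + 1) * (-(q : ℂ))⁻¹ ^ (m + 1) = 1 := by
      rw [← mul_pow, mul_inv_cancel₀ (neg_ne_zero.2 hq), one_pow]
    linear_combination (-(q : ℂ))⁻¹ ^ (m + 1) * cc (-(q : ℂ)) (k + 1) * h2
  rw [this]
  refine mul_ne_zero (neg_ne_zero.2 (pow_ne_zero _ (neg_ne_zero.2 hq))) ?_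
  have h1 := gs_pos (mul_self_nonneg q⁻¹) m
  have h2 := gs_pos (mul_self_nonneg q⁻¹) k
  have h3 : 0 < (q⁻¹ * q⁻¹) ^ (m + 1) := pow_pos (mul_self_pos.2 (inv_ne_zero hr)) _
  exact_mod_cast (add_pos h1 (mul_pos h3 h2)).ne'

theorem haar_R (z : Z (q : ℂ)) : haar hq (Rr hq z) = 0 := by
  have hp := neg_ne_zero.2 hq
  have n := zNice hq
  have d := zDer hq
  have hz := z_mem_NN hq z
  have h0 : ∀ j k l m, haar hq (Rr hq (M (q : ℂ) j k l (za (q : ℂ) ^ m))) = 0 := by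
    intro j k l m
    cases k with
    | zero => rw [R_ma_zero d, map_zero]
    | succ k => rw [R_ma_succ hp n d, map_smul, haar_Ma hq (by simp), smul_zero]
  refine Submodule.span_induction (p := fun z _ => haar hq (Rr hq z) = 0) ?_ ?_ ?_ ?_ hz
  · rintro _ ⟨j, k, l, m, rfl | rfl⟩
    · exact h0 _ _ _ _
    · cases m with
      | zero => simpa using h0 j k l 0
      | succ m =>
        cases k with
        | zero => rw [R_mA_zero hp n d, map_smul, haar_MA hq (by simp), smul_zero]
        | succ k =>
          rw [R_mA_succ hp n d, map_add, map_smul, map_smul]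
          by_cases h : j = 0 ∧ k = l ∧ m = 0
          · obtain ⟨rfl, rfl, rfl⟩ := h
            rw [haar_M0, haar_M0]
            have e1 := cc_ne q k
            have e2 := cc_ne q (k + 1)
            rw [qn_cc hq, qn_cc hq]
            have e3 := cc_succ (-(q : ℂ)) (k + 1)
            have e4 : cc (-(q : ℂ)) 1 = 1 := by simp [cc]
            simp only [smul_eq_mul, zero_add, pow_one, e4, inv_neg] at *
            rw [pow_succ]
            have e5 : cc (-(q : ℂ)) (k + 1) = (q : ℂ) * q * (cc (-(q : ℂ)) (k + 1 + 1) - 1) := by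
              rw [e3]; field_simp; ring
            have e6 : -(-(q:ℂ) * 1 + -(q:ℂ)⁻¹ * cc (-(q:ℂ)) (k + 1)) = (q : ℂ) * cc (-(q : ℂ)) (k + 1 + 1) := by
              rw [e3]; field_simp; ring
            rw [e6]
            field_simp
            ring
          · rw [haar_MA hq h, haar_MA hq (by omega)]; simp
  · simp
  · intro x y _ _ hx hy; rw [map_add, map_add, hx, hy, add_zero]
  · intro c x _ hx; rw [map_smul, map_smul, hx, smul_zero]
end real
end Haar22

namespace Haar22
set_option linter.unusedSimpArgs false
set_option linter.unusedVariables false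
set_option linter.unusedSectionVars false

section
variable {X S : Type} [Ring X] [Algebra ℂ X] [Ring S] [Algebra ℂ S]

abbrev lT (X : Type) [Ring X] [Algebra ℂ X] {S S' : Type} [Ring S] [Algebra ℂ S] [AddCommGroup S'] [Module ℂ S'] (f : S →ₗ[ℂ] S') :
    X ⊗[ℂ] S →ₗ[ℂ] X ⊗[ℂ] S' :=
  TensorProduct.map (LinearMap.id (M := X)) f

theorem lT_der {R th : S →ₗ[ℂ] S} (h : ∀ x y, R (x * y) = x * R y + R x * th y)
    (s t : X ⊗[ℂ] S) : lT X R (s * t) = s * lT X R t + lT X R s * lT X th t := by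
  induction s using TensorProduct.induction_on with
  | zero => simp
  | add s1 s2 h1 h2 => rw [add_mul, map_add, h1, h2, add_mul, map_add, add_mul]; abel
  | tmul x s =>
    induction t using TensorProduct.induction_on with
    | zero => simp
    | add s1 s2 h1 h2 => rw [mul_add, map_add, h1, h2, map_add, map_add, mul_add, mul_add]; abel
    | tmul y t =>
      simp [Algebra.TensorProduct.tmul_mul_tmul, h, TensorProduct.tmul_add]

theorem lT_mul {th : S →ₗ[ℂ] S} (h : ∀ x y, th (x * y) = th x * th y)
    (s t : X ⊗[ℂ] S) : lT X th (s * t) = lT X th s * lT X th t := by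
  induction s using TensorProduct.induction_on with
  | zero => simp
  | add s1 s2 h1 h2 => rw [add_mul, map_add, h1, h2, map_add, add_mul]
  | tmul x s =>
    induction t using TensorProduct.induction_on with
    | zero => simp
    | add s1 s2 h1 h2 => rw [mul_add, map_add, h1, h2, map_add, mul_add]
    | tmul y t =>
      simp [Algebra.TensorProduct.tmul_mul_tmul, h]

theorem lT_alg {th : S →ₗ[ℂ] S} (c : ℂ) : lT X th (algebraMap ℂ _ c) = c • ((1 : X) ⊗ₜ th 1) := by
  rw [Algebra.algebraMap_eq_smul_one, Algebra.TensorProduct.one_def, map_smul, TensorProduct.map_tmul]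
  rfl

theorem lT_comp {S S' S'' : Type} [Ring S] [Algebra ℂ S] [Ring S'] [Algebra ℂ S'] [AddCommGroup S''] [Module ℂ S'']
    (f : S →ₗ[ℂ] S') (g : S' →ₗ[ℂ] S'') (s : X ⊗[ℂ] S) : lT X g (lT X f s) = lT X (g ∘ₗ f) s := by
  induction s using TensorProduct.induction_on with
  | zero => simp
  | add s1 s2 h1 h2 => rw [map_add, map_add, h1, h2, map_add]
  | tmul x s => simp
end

section
variable {q : ℂ} (hq : q ≠ 0)

theorem th_t : th hq (zt q) = zt q := by simp [th_apply, Phi, liftZ_t]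
theorem th_t' : th hq (zt' q) = zt' q := by simp [th_apply, Phi, liftZ_t']
theorem Rr_c : Rr hq (zc q) = 0 := by
  have d := zDer hq
  rw [zc_eq hq, map_smul, d.R_mul, d.RB, d.Rt', mul_zero, zero_mul, add_zero, smul_zero]
theorem Rr_d : Rr hq (zd q) = zc q := by
  have d := zDer hq
  rw [zd_eq hq, d.R_mul, d.RA, d.Rt', th_t' hq, zc_eq hq, mul_zero, zero_add, smul_mul_assoc, neg_neg]
theorem th_c : th hq (zc q) = (-q) • zc q := by
  have d := zDer hq
  rw [zc_eq hq, map_smul, d.th_mul, d.thB, th_t' hq, smul_mul_assoc, smul_comm]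
theorem th_d : th hq (zd q) = (-q)⁻¹ • zd q := by
  have d := zDer hq
  rw [zd_eq hq, d.th_mul, d.thA, th_t' hq, smul_mul_assoc]

variable {X : Type} [Ring X] [Algebra ℂ X] {x11 x12 x21 x22 y : X}

structure Co (α : Z q →ₐ[ℂ] X ⊗[ℂ] Z q) (x11 x12 x21 x22 y : X) : Prop where
  a : α (za q) = x11 ⊗ₜ za q + x12 ⊗ₜ zc q
  b : α (zb q) = x11 ⊗ₜ zb q + x12 ⊗ₜ zd q
  c : α (zc q) = x21 ⊗ₜ za q + x22 ⊗ₜ zc q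
  d : α (zd q) = x21 ⊗ₜ zb q + x22 ⊗ₜ zd q
  t : α (zt q) = y ⊗ₜ zt q

variable {α : Z q →ₐ[ℂ] X ⊗[ℂ] Z q} (h : Co α x11 x12 x21 x22 y)

theorem co_R {α : Z q →ₐ[ℂ] X ⊗[ℂ] Z q} (h : Co α x11 x12 x21 x22 y) (z : Z q) :
    α (Rr hq z) = lT X (Rr hq) (α z) ∧ α (th hq z) = lT X (th hq) (α z) := by
  have d := zDer hq
  have hs (x : X) (z : Z q) (c : ℂ) : x ⊗ₜ[ℂ] (c • z) = c • (x ⊗ₜ[ℂ] z) :=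
    TensorProduct.tmul_smul _ _ _
  induction z using z_induct0 with
  | hs c =>
    rw [AlgHom.commutes, lT_alg, lT_alg, Algebra.algebraMap_eq_smul_one, map_smul, map_smul,
      d.R_one, d.th_one, map_smul, map_smul, map_zero]
    refine ⟨by rw [TensorProduct.tmul_zero], ?_⟩
    have e1 : th hq 1 = 1 := d.th_one
    exact congrArg (fun x => c • x) ((congrArg α e1).trans (map_one α))
  | hadd x y hx hy => simp only [map_add, hx.1, hx.2, hy.1, hy.2, and_self]
  | hmul x y hx hy =>
    rw [map_mul α x y, lT_der d.R_mul, lT_mul d.th_mul, d.R_mul, d.th_mul, map_add, map_mul α, map_mul α,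
      map_mul α, hx.1, hx.2, hy.1, hy.2]
    exact ⟨rfl, rfl⟩
  | ha =>
    rw [d.Ra, d.tha, h.a, map_zero, map_smul, h.a, map_add, map_add]
    simp only [TensorProduct.map_tmul, d.Ra, d.tha, Rr_c, th_c, LinearMap.id_apply, hs,
      TensorProduct.tmul_zero, add_zero, smul_add, and_self]
  | hb =>
    rw [d.Rb, d.thb, h.b, h.a, map_smul, h.b, map_add, map_add]
    simp only [TensorProduct.map_tmul, d.Rb, d.thb, Rr_d, th_d, LinearMap.id_apply, hs,
      TensorProduct.tmul_zero, add_zero, smul_add, and_self]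
  | hc =>
    rw [Rr_c, th_c, h.c, map_zero, map_smul, h.c, map_add, map_add]
    simp only [TensorProduct.map_tmul, d.Ra, d.tha, Rr_c, th_c, LinearMap.id_apply, hs,
      TensorProduct.tmul_zero, add_zero, smul_add, and_self]
  | hd =>
    rw [Rr_d, th_d, h.d, h.c, map_smul, h.d, map_add, map_add]
    simp only [TensorProduct.map_tmul, d.Rb, d.thb, Rr_d, th_d, LinearMap.id_apply, hs,
      TensorProduct.tmul_zero, add_zero, smul_add, and_self]
  | ht =>
    rw [d.Rt, th_t hq, h.t, map_zero]
    simp only [TensorProduct.map_tmul, d.Rt, th_t hq, LinearMap.id_apply,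
      TensorProduct.tmul_zero, h.t, and_self]

section T
variable {u v : ℂ} (hu : u ≠ 0) (hv : v ≠ 0)

def TC : Z q →ₐ[ℂ] Z q := Tt hq hu hv (inv_ne_zero (mul_ne_zero hu hv))

theorem TC_a : TC hq hu hv (za q) = u • za q := Tt_a _ _ _ _
theorem TC_b : TC hq hu hv (zb q) = v • zb q := Tt_b _ _ _ _
theorem TC_t : TC hq hu hv (zt q) = (u * v)⁻¹ • zt q := Tt_t _ _ _ _
theorem TC_c : TC hq hu hv (zc q) = u • zc q := by
  rw [zc_eq hq, map_smul, map_mul, TC, Tt_B, Tt_t', smul_mul_smul_comm, smul_comm]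
  congr 1; field_simp
theorem TC_d : TC hq hu hv (zd q) = v • zd q := by
  rw [zd_eq hq, map_mul, TC, Tt_A, Tt_t', smul_mul_smul_comm]
  congr 1; field_simp

theorem co_T {α : Z q →ₐ[ℂ] X ⊗[ℂ] Z q} (h : Co α x11 x12 x21 x22 y) (z : Z q) :
    α (TC hq hu hv z) = lT X (TC hq hu hv).toLinearMap (α z) := by
  have hs (x : X) (z : Z q) (c : ℂ) : x ⊗ₜ[ℂ] (c • z) = c • (x ⊗ₜ[ℂ] z) :=
    TensorProduct.tmul_smul _ _ _
  induction z using z_induct0 with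
  | hs c =>
    rw [AlgHom.commutes, AlgHom.commutes, lT_alg, Algebra.algebraMap_eq_smul_one]
    rw [AlgHom.toLinearMap_apply, map_one]; rfl
  | hadd x y hx hy => simp only [map_add, hx, hy]
  | hmul x y hx hy =>
    rw [map_mul, map_mul, map_mul, lT_mul (fun x y => map_mul (TC hq hu hv) x y), hx, hy]
  | ha =>
    rw [TC_a, map_smul, h.a, map_add]
    simp only [TensorProduct.map_tmul, AlgHom.toLinearMap_apply, LinearMap.id_apply, TC_a, TC_c, hs, smul_add]
  | hb =>
    rw [TC_b, map_smul, h.b, map_add]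
    simp only [TensorProduct.map_tmul, AlgHom.toLinearMap_apply, LinearMap.id_apply, TC_b, TC_d, hs, smul_add]
  | hc =>
    rw [TC_c, map_smul, h.c, map_add]
    simp only [TensorProduct.map_tmul, AlgHom.toLinearMap_apply, LinearMap.id_apply, TC_a, TC_c, hs, smul_add]
  | hd =>
    rw [TC_d, map_smul, h.d, map_add]
    simp only [TensorProduct.map_tmul, AlgHom.toLinearMap_apply, LinearMap.id_apply, TC_b, TC_d, hs, smul_add]
  | ht =>
    rw [TC_t, map_smul, h.t]
    simp only [TensorProduct.map_tmul, AlgHom.toLinearMap_apply, LinearMap.id_apply, TC_t, hs]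
end T

/-- invariance subspace -/
def Inv (α : Z q →ₐ[ℂ] X ⊗[ℂ] Z q) : Submodule ℂ (Z q) :=
  LinearMap.eqLocus ((TensorProduct.rid ℂ X).toLinearMap ∘ₗ lT X (haar hq) ∘ₗ α.toLinearMap)
    (Algebra.linearMap ℂ X ∘ₗ haar hq)

theorem mem_Inv {α : Z q →ₐ[ℂ] X ⊗[ℂ] Z q} {z : Z q} : z ∈ Inv hq α ↔
    TensorProduct.rid ℂ X (lT X (haar hq) (α z)) = algebraMap ℂ X (haar hq z) := Iff.rfl

theorem eig_zero {V : Type} [AddCommGroup V] [Module ℂ V] {c : ℂ} (hc : c ≠ 1) {e : V}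
    (h : c • e = e) : e = 0 := by
  have e4 : (c - 1) • e = 0 := by rw [sub_smul, h, one_smul, sub_self]
  exact (smul_eq_zero.1 e4).resolve_left (sub_ne_zero.2 hc)

theorem Inv_eig {α : Z q →ₐ[ℂ] X ⊗[ℂ] Z q} (h : Co α x11 x12 x21 x22 y) {u v : ℂ} (hu : u ≠ 0)
    (hv : v ≠ 0) {z : Z q} {c : ℂ} (hz : TC hq hu hv z = c • z) (hc : c ≠ 1) : z ∈ Inv hq α := by
  rw [mem_Inv, haar_eig hq _ _ _ hz hc, map_zero]
  have e := co_T hq hu hv h z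
  have e2 := congrArg (lT X (haar hq)) e
  have e3 : haar hq ∘ₗ (TC hq hu hv).toLinearMap = haar hq := LinearMap.ext fun z => haar_T hq _ _ _ z
  rw [lT_comp, e3, hz, map_smul, map_smul] at e2
  have e5 := eig_zero (V := X ⊗[ℂ] ℂ) (e := (lT X (haar hq)) (α z)) hc e2
  rw [e5, map_zero]
end

section real
variable {q : ℝ} (hq : (q : ℂ) ≠ 0)
variable {X : Type} [Ring X] [Algebra ℂ X] {x11 x12 x21 x22 y : X}
  {α : Z (q : ℂ) →ₐ[ℂ] X ⊗[ℂ] Z (q : ℂ)} (h : Co α x11 x12 x21 x22 y)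

theorem Inv_R {α : Z (q : ℂ) →ₐ[ℂ] X ⊗[ℂ] Z (q : ℂ)} (h : Co α x11 x12 x21 x22 y) (z : Z (q : ℂ)) :
    Rr hq z ∈ Inv hq α := by
  rw [mem_Inv, (co_R hq h z).1, lT_comp, haar_R hq]
  have : haar hq ∘ₗ Rr hq = 0 := LinearMap.ext fun z => haar_R hq z
  rw [this]
  simp [lT]

theorem Inv_one : (1 : Z (q : ℂ)) ∈ Inv hq α := by
  rw [mem_Inv, map_one, Algebra.TensorProduct.one_def]
  simp [haar_one, lT]

theorem Inv_MA0 {α : Z (q : ℂ) →ₐ[ℂ] X ⊗[ℂ] Z (q : ℂ)} (h : Co α x11 x12 x21 x22 y) (j : ℤ) (k m : ℕ) :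
    M (q : ℂ) j k 0 (zA (q : ℂ) ^ m) ∈ Inv hq α := by
  have h2 : (2 : ℂ) ≠ 0 := two_ne_zero
  by_cases h1 : (-j - m : ℤ) = 0
  · by_cases h3 : (k - j : ℤ) = 0
    · have : j = 0 := by omega
      have : m = 0 := by omega
      have : k = 0 := by omega
      subst j m k
      have := Inv_one (α := α) hq
      simpa [mon, zp_zero] using this
    · refine Inv_eig hq h one_ne_zero h2 (Tt_MA _ _ _ _ _ _ _ _) ?_
      have := two_zpow h3
      rw [zpow_sub₀ h2, zpow_natCast] at this
      simpa [div_eq_mul_inv, mul_comm] using this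
  · refine Inv_eig hq h h2 one_ne_zero (Tt_MA _ _ _ _ _ _ _ _) ?_
    have := two_zpow h1
    rw [zpow_sub₀ h2, zpow_natCast, zpow_neg] at this
    simpa [div_eq_mul_inv, mul_comm] using this

theorem smul_mem_iff' {V : Type} [AddCommGroup V] [Module ℂ V] (P : Submodule ℂ V) {c : ℂ} (hc : c ≠ 0) {x : V}
    (h : c • x ∈ P) : x ∈ P := (P.smul_mem_iff hc).1 h

theorem Inv_MA {α : Z (q : ℂ) →ₐ[ℂ] X ⊗[ℂ] Z (q : ℂ)} (h : Co α x11 x12 x21 x22 y) (l : ℕ) : ∀ (j : ℤ) (k m : ℕ),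
    M (q : ℂ) j k l (zA (q : ℂ) ^ m) ∈ Inv hq α := by
  have hp := neg_ne_zero.2 hq
  have n := zNice hq
  have d := zDer hq
  induction l with
  | zero => exact Inv_MA0 hq h
  | succ l ih =>
    intro j k m
    cases k with
    | zero =>
      have := Inv_R hq h (M (q : ℂ) j 0 l (zA (q : ℂ) ^ (m + 1)))
      rw [R_mA_zero hp n d] at this
      exact smul_mem_iff' _ (neg_ne_zero.2 (mul_ne_zero (pow_ne_zero _ hp) (cc_ne q m))) this
    | succ k =>
      have := Inv_R hq h (M (q : ℂ) j (k + 1) l (zA (q : ℂ) ^ (m + 1)))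
      rw [R_mA_succ hp n d] at this
      exact smul_mem_iff' _ (co_ne q hq m k) ((Submodule.add_mem_iff_left _
        (Submodule.smul_mem _ _ (ih j k m))).1 this)

theorem Inv_all {α : Z (q : ℂ) →ₐ[ℂ] X ⊗[ℂ] Z (q : ℂ)} (h : Co α x11 x12 x21 x22 y) (z : Z (q : ℂ)) :
    z ∈ Inv hq α := by
  have hp := neg_ne_zero.2 hq
  have n := zNice hq
  have d := zDer hq
  have hz := z_mem_NN hq z
  refine (Submodule.span_le.2 ?_) hz
  rintro _ ⟨j, k, l, m, rfl | rfl⟩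
  · cases m with
    | zero => simpa using Inv_MA hq h l j k 0
    | succ m =>
      have := Inv_R hq h (M (q : ℂ) j (k + 1) l (za (q : ℂ) ^ m))
      rw [R_ma_succ hp n d] at this
      exact smul_mem_iff' _ (mul_ne_zero (cc_ne q k) (pow_ne_zero _ hp)) this
  · exact Inv_MA hq h l j k m
end real
end Haar22

namespace Haar22
set_option linter.unusedSimpArgs false
set_option linter.unusedVariables false
set_option linter.unusedSectionVars false
open Polynomial in
theorem hasSum_L {P σ : ℝ} (h0 : 0 < P) (h1 : P < 1) (L : ℂ[X] →ₗ[ℂ] ℂ)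
    (hL : ∀ k : ℕ, L (X ^ k) = (((1 - P) * σ ^ k * (1 - P ^ (k + 1))⁻¹ : ℝ) : ℂ)) (G : ℂ[X]) :
    HasSum (fun n : ℕ => (((1 - P) * P ^ n : ℝ) : ℂ) * G.eval ((σ * P ^ n : ℝ) : ℂ)) (L G) := by
  induction G using Polynomial.induction_on' with
  | add f g hf hg =>
    rw [map_add]
    refine (hf.add hg).congr_fun ?_
    intro n; simp [mul_add]
  | monomial k c =>
    have e : (monomial k c : ℂ[X]) = c • X ^ k := by rw [smul_X_eq_monomial]
    rw [e, map_smul, hL]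
    have hg : HasSum (fun n : ℕ => (P ^ (k + 1)) ^ n) (1 - P ^ (k + 1))⁻¹ :=
      hasSum_geometric_of_lt_one (by positivity) (pow_lt_one₀ h0.le h1 (by simp))
    have hg2 := (Complex.hasSum_ofReal.2 (hg.mul_left ((1 - P) * σ ^ k))).mul_left c
    rw [smul_eq_mul]
    refine hg2.congr_fun ?_
    intro n
    simp
    ring

/-- support sets -/
structure Supp (r : ℝ) (S : Set ℝ) : Prop where
  nn : ∀ x ∈ S, 0 ≤ x
  le : ∀ x ∈ S, x ≤ 1
  le2 : ∀ x ∈ S, r * x ≤ 1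
  dn : ∀ x ∈ S, x = 1 ∨ r⁻¹ * x ∈ S
  up : ∀ x ∈ S, r * x = 1 ∨ r * x ∈ S

open Polynomial in
theorem pos_sum {P σ : ℝ} (h0 : 0 < P) (h1 : P < 1) (L : ℂ[X] →ₗ[ℂ] ℂ)
    (hL : ∀ k : ℕ, L (X ^ k) = (((1 - P) * σ ^ k * (1 - P ^ (k + 1))⁻¹ : ℝ) : ℂ)) (G : ℂ[X])
    (hG : ∀ x ∈ Set.range (fun n : ℕ => σ * P ^ n), 0 ≤ G.eval (x : ℂ)) : 0 ≤ L G := by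
  refine HasSum.nonneg ?_ (hasSum_L h0 h1 L hL G)
  intro n
  refine mul_nonneg ?_ (hG _ ⟨n, rfl⟩)
  have : 0 ≤ (1 - P) * P ^ n := mul_nonneg (by linarith) (by positivity)
  exact_mod_cast this

open Polynomial in
theorem L_int (L : ℂ[X] →ₗ[ℂ] ℂ) (hL : ∀ k : ℕ, L (X ^ k) = ((((k : ℝ) + 1)⁻¹ : ℝ) : ℂ)) (G : ℂ[X]) :
    L G = ∫ x : ℝ in (0:ℝ)..1, G.eval (x : ℂ) := by
  have hc : ∀ G : ℂ[X], Continuous fun x : ℝ => G.eval (x : ℂ) := fun G =>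
    G.continuous.comp Complex.continuous_ofReal
  induction G using Polynomial.induction_on' with
  | add f g hf hg =>
    rw [map_add, hf, hg, ← intervalIntegral.integral_add ((hc f).intervalIntegrable _ _)
      ((hc g).intervalIntegrable _ _)]
    simp
  | monomial k c =>
    have e : (monomial k c : ℂ[X]) = c • X ^ k := by rw [smul_X_eq_monomial]
    rw [e, map_smul, hL]
    have : ∀ x : ℝ, (c • X ^ k : ℂ[X]).eval (x : ℂ) = c * ((x ^ k : ℝ) : ℂ) := by intro x; simp
    simp only [this]
    rw [intervalIntegral.integral_const_mul, intervalIntegral.integral_ofReal, integral_pow]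
    simp

open Polynomial in
theorem pos_int (L : ℂ[X] →ₗ[ℂ] ℂ) (hL : ∀ k : ℕ, L (X ^ k) = ((((k : ℝ) + 1)⁻¹ : ℝ) : ℂ)) (G : ℂ[X])
    (hG : ∀ x ∈ Set.Icc (0 : ℝ) 1, 0 ≤ G.eval (x : ℂ)) : 0 ≤ L G := by
  rw [L_int L hL]
  have : ∫ x : ℝ in (0:ℝ)..1, G.eval (x : ℂ) = ∫ x : ℝ in (0:ℝ)..1, (((G.eval (x : ℂ)).re : ℝ) : ℂ) := by
    refine intervalIntegral.integral_congr ?_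
    intro x hx
    rw [Set.uIcc_of_le zero_le_one] at hx
    exact (Complex.eq_re_of_ofReal_le (r := 0) (by simpa using hG x hx))
  rw [this, intervalIntegral.integral_ofReal]
  have : 0 ≤ ∫ x : ℝ in (0:ℝ)..1, (G.eval (x : ℂ)).re :=
    intervalIntegral.integral_nonneg zero_le_one fun x hx => (Complex.le_def.1 (hG x hx)).1
  exact_mod_cast this

open Polynomial in
theorem exists_supp (r : ℝ) (hp : 0 < r) (L : ℂ[X] →ₗ[ℂ] ℂ)
    (hL : ∀ k : ℕ, L (X ^ k) = (((∑ i ∈ Finset.range (k + 1), r ^ i : ℝ) : ℂ))⁻¹) :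
    ∃ S : Set ℝ, Supp r S ∧ ∀ G : ℂ[X], (∀ x ∈ S, 0 ≤ G.eval (x : ℂ)) → 0 ≤ L G := by
  rcases lt_trichotomy r 1 with h | h | h
  · refine ⟨_, ?_, pos_sum (σ := 1) hp h L ?_⟩
    · constructor
      · rintro _ ⟨n, rfl⟩; positivity
      · rintro _ ⟨n, rfl⟩; simpa using pow_le_one₀ hp.le h.le
      · rintro _ ⟨n, rfl⟩
        have : r ^ (n + 1) ≤ 1 := pow_le_one₀ hp.le h.le
        rw [pow_succ'] at this; simpa using this
      · rintro _ ⟨n, rfl⟩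
        cases n with
        | zero => left; simp
        | succ n => right; refine ⟨n, ?_⟩; simp only [one_mul]; rw [pow_succ]; field_simp
      · rintro _ ⟨n, rfl⟩
        right; refine ⟨n + 1, ?_⟩; simp only [one_mul]; rw [pow_succ']
    · intro k
      rw [hL, ← Complex.ofReal_inv]; congr 1
      rw [geom_sum_eq h.ne]
      have h1 : r ^ (k + 1) < 1 := pow_lt_one₀ hp.le h (by simp)
      have h2 : r ^ (k + 1) - 1 ≠ 0 := by linarith
      have h3 : 1 - r ^ (k + 1) ≠ 0 := by linarith
      have h4 : r - 1 ≠ 0 := by linarith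
      rw [inv_div, one_pow, mul_one, ← div_eq_mul_inv, div_eq_div_iff h2 h3]
      ring
  · subst h
    refine ⟨_, ?_, pos_int L ?_⟩
    · constructor
      · intro x hx; exact hx.1
      · intro x hx; exact hx.2
      · intro x hx; simpa using hx.2
      · intro x hx; right; simpa using hx
      · intro x hx; right; simpa using hx
    · intro k; rw [hL]; simp
  · have hP : 0 < r⁻¹ := by positivity
    have hP1 : r⁻¹ < 1 := inv_lt_one_of_one_lt₀ h
    refine ⟨_, ?_, pos_sum (σ := r⁻¹) hP hP1 L ?_⟩
    · constructor
      · rintro _ ⟨n, rfl⟩; positivity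
      · rintro _ ⟨n, rfl⟩
        have : r⁻¹ ^ (n + 1) ≤ 1 := pow_le_one₀ hP.le hP1.le
        rw [pow_succ'] at this; simpa using this
      · rintro _ ⟨n, rfl⟩
        have : r⁻¹ ^ n ≤ 1 := pow_le_one₀ hP.le hP1.le
        simp only []
        rwa [← mul_assoc, mul_inv_cancel₀ hp.ne', one_mul]
      · rintro _ ⟨n, rfl⟩
        right; refine ⟨n + 1, ?_⟩; simp only []; rw [pow_succ']
      · rintro _ ⟨n, rfl⟩
        simp only []
        rw [← mul_assoc, mul_inv_cancel₀ hp.ne', one_mul]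
        cases n with
        | zero => left; simp
        | succ n => right; exact ⟨n, by simp only []; rw [pow_succ']⟩
    · intro k
      rw [hL, ← Complex.ofReal_inv]; congr 1
      rw [geom_sum_eq h.ne']
      have h1 : 1 < r ^ (k + 1) := one_lt_pow₀ h (by simp)
      have h2 : r ^ (k + 1) - 1 ≠ 0 := by linarith
      have h4 : r - 1 ≠ 0 := by linarith
      have h5 : 1 - r⁻¹ ^ (k + 1) = (r ^ (k + 1) - 1) / r ^ (k + 1) := by
        rw [inv_pow]; field_simp
      rw [h5, inv_div, inv_div]
      field_simp
      rw [one_div, inv_pow, pow_succ]; field_simp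
end Haar22

namespace Haar22
set_option linter.unusedSimpArgs false
set_option linter.unusedVariables false
set_option linter.unusedSectionVars false
open Polynomial

section abs
variable {S : Type} [Ring S] [Algebra ℂ S] {p : ℂ} {a b A B t t' : S}

theorem aeval_comm {x Y : S} {c : ℂ} (h : x * Y = c • (Y * x)) (G : ℂ[X]) :
    aeval x G * Y = Y * aeval x (G.comp (C c * X)) := by
  induction G using Polynomial.induction_on' with
  | add f g hf hg => rw [map_add, add_mul, hf, hg, add_comp, map_add, mul_add]
  | monomial k e =>
    rw [← smul_X_eq_monomial, smul_comp, map_smul, map_smul, smul_mul_assoc, mul_smul_comm, X_pow_comp,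
      mul_pow, ← C_pow, ← smul_eq_C_mul, map_smul, map_pow, aeval_X, pow_comm' h, mul_smul_comm]

def Up (c : ℂ) (G : ℂ[X]) : ℂ[X] := (1 - C c * X) * G.comp (C c * X)
def Dn (c : ℂ) (G : ℂ[X]) : ℂ[X] := (1 - X) * G.comp (C c⁻¹ * X)

theorem Nice.xa (n : Nice p a b A B t t') : (b * B) * a = (p * p) • (a * (b * B)) := by
  rw [mul_assoc, n.Ba, mul_smul_comm, ← mul_assoc, n.ba, smul_mul_assoc, smul_smul, mul_assoc]
theorem Nice.Ax (n : Nice p a b A B t t') : A * (b * B) = (p * p) • ((b * B) * A) := by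
  rw [← mul_assoc, n.Ab, smul_mul_assoc, mul_assoc, n.AB, mul_smul_comm, smul_smul, mul_assoc]

theorem conj_up (n : Nice p a b A B t t') (G : ℂ[X]) :
    A * (aeval (b * B) G * a) = aeval (b * B) (Up (p * p) G) := by
  rw [aeval_comm n.xa, ← mul_assoc, n.Aa, Up, map_mul (aeval (b * B)), map_sub, map_mul (aeval (b * B)), map_one, aeval_C, aeval_X,
    Algebra.smul_def]
theorem conj_dn (hp : p ≠ 0) (n : Nice p a b A B t t') (G : ℂ[X]) :
    a * (aeval (b * B) G * A) = aeval (b * B) (Dn (p * p) G) := by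
  rw [aeval_comm (inv_comm (mul_ne_zero hp hp) n.Ax), ← mul_assoc, n.aA, Dn, map_mul, map_sub,
    map_one, aeval_X]

theorem conj_up_pow (n : Nice p a b A B t t') (m : ℕ) (G : ℂ[X]) :
    A ^ m * (aeval (b * B) G * a ^ m) = aeval (b * B) ((Up (p * p))^[m] G) := by
  induction m generalizing G with
  | zero => simp
  | succ m ih =>
    rw [Function.iterate_succ_apply, ← ih, ← conj_up n, pow_succ, pow_succ']
    simp only [mul_assoc]
theorem conj_dn_pow (hp : p ≠ 0) (n : Nice p a b A B t t') (m : ℕ) (G : ℂ[X]) :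
    a ^ m * (aeval (b * B) G * A ^ m) = aeval (b * B) ((Dn (p * p))^[m] G) := by
  induction m generalizing G with
  | zero => simp
  | succ m ih =>
    rw [Function.iterate_succ_apply, ← ih, ← conj_dn hp n, pow_succ, pow_succ']
    simp only [mul_assoc]

theorem zp_inv {x y : S} (h : x * y = 1) (h' : y * x = 1) (j : ℤ) : zp y x j * zp x y j = 1 := by
  have key : ∀ {x y : S}, y * x = 1 → ∀ n : ℕ, y ^ n * x ^ n = 1 := by
    intro x y h n
    induction n with
    | zero => simp
    | succ n ih => rw [pow_succ, pow_succ', mul_assoc, ← mul_assoc y x, h, one_mul, ih]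
  cases j with
  | ofNat n => exact key h' n
  | negSucc n => exact key h (n + 1)

theorem zp_bB (n : Nice p a b A B t t') (k : ℤ) : zp B b k * zp b B k = (b * B) ^ k.natAbs := by
  have c : Commute B b := n.Bb
  cases k with
  | ofNat k =>
    show B ^ k * b ^ k = (b * B) ^ k
    rw [← c.mul_pow, n.Bb]
  | negSucc k =>
    show b ^ (k + 1) * B ^ (k + 1) = (b * B) ^ (k + 1)
    rw [← c.symm.mul_pow]

/-- weight vectors -/
def W (a b A B t t' : S) (s : ℤ × ℤ × ℤ) : ℂ[X] →ₗ[ℂ] S :=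
  LinearMap.mulLeft ℂ (zp t t' s.1 * zp b B s.2.1) ∘ₗ LinearMap.mulRight ℂ (zp a A s.2.2) ∘ₗ
    (aeval (b * B)).toLinearMap

theorem W_apply (s : ℤ × ℤ × ℤ) (f : ℂ[X]) : W a b A B t t' s f =
    zp t t' s.1 * zp b B s.2.1 * (aeval (b * B) f * zp a A s.2.2) := rfl

theorem bB_zp (n : Nice p a b A B t t') (k l : ℕ) :
    b ^ k * B ^ l = zp b B ((k : ℤ) - l) * (b * B) ^ (min k l) := by
  have c : Commute b B := n.Bb.symm
  rcases le_total l k with h | h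
  · obtain ⟨m, rfl⟩ := Nat.exists_eq_add_of_le h
    have : (((l + m : ℕ) : ℤ) - l) = (m : ℕ) := by push_cast; ring
    rw [this, zp_nat, min_eq_right h, c.mul_pow, ← mul_assoc, ← pow_add, add_comm m]
  · obtain ⟨m, rfl⟩ := Nat.exists_eq_add_of_le h
    have : ((k : ℤ) - ((k + m : ℕ) : ℤ)) = -((m : ℕ) : ℤ) := by push_cast; ring
    rw [this, zp_neg, min_eq_left h, c.mul_pow, ← mul_assoc, ← (c.pow_pow k m).eq, mul_assoc,
      ← pow_add, add_comm m]

theorem mon_W (n : Nice p a b A B t t') (j m : ℤ) (k l : ℕ) :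
    mon b B t t' j k l (zp a A m) = W a b A B t t' (j, (k : ℤ) - l, m) (X ^ min k l) := by
  rw [W_apply, mon, map_pow, aeval_X, ← mul_assoc (b ^ k), bB_zp n]
  simp only [mul_assoc]

theorem NN_le_W (n : Nice p a b A B t t') :
    NN a b A B t t' ≤ ⨆ s, LinearMap.range (W a b A B t t' s) := by
  refine Submodule.span_le.2 ?_
  rintro _ ⟨j, k, l, m, rfl | rfl⟩
  · rw [← zp_nat a A, mon_W n]
    exact Submodule.mem_iSup_of_mem _ (LinearMap.mem_range_self _ _)
  · rw [← zp_neg a A, mon_W n]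
    exact Submodule.mem_iSup_of_mem _ (LinearMap.mem_range_self _ _)

/-- star data -/
structure StarD (sZ : S → S) (a b A B t t' : S) : Prop where
  add : ∀ x y, sZ (x + y) = sZ x + sZ y
  smul : ∀ (c : ℂ) x, sZ (c • x) = (starRingEnd ℂ) c • sZ x
  mul : ∀ x y, sZ (x * y) = sZ y * sZ x
  one : sZ 1 = 1
  sa : sZ a = A
  sA : sZ A = a
  sb : sZ b = B
  sB : sZ B = b
  st : sZ t = t'
  st' : sZ t' = t

variable {sZ : S → S}

theorem StarD.pow (h : StarD sZ a b A B t t') (x : S) (n : ℕ) : sZ (x ^ n) = sZ x ^ n := by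
  induction n with
  | zero => simpa using h.one
  | succ n ih => rw [pow_succ, h.mul, ih, pow_succ']
theorem StarD.zp (h : StarD sZ a b A B t t') {x y : S} (hx : sZ x = y) (hy : sZ y = x) (j : ℤ) :
    sZ (zp x y j) = Haar22.zp y x j := by
  cases j with
  | ofNat n => show sZ (x ^ n) = y ^ n; rw [h.pow, hx]
  | negSucc n => show sZ (y ^ (n + 1)) = x ^ (n + 1); rw [h.pow, hy]
theorem StarD.aeval (h : StarD sZ a b A B t t') (f : ℂ[X]) :
    sZ (aeval (b * B) f) = Polynomial.aeval (b * B) (f.map (starRingEnd ℂ)) := by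
  induction f using Polynomial.induction_on' with
  | add f g hf hg => rw [map_add, h.add, hf, hg, Polynomial.map_add, map_add]
  | monomial k c =>
    rw [map_monomial, ← smul_X_eq_monomial, ← smul_X_eq_monomial, map_smul, map_smul, h.smul,
      map_pow, aeval_X, h.pow, h.mul, h.sb, h.sB]

theorem StarD.W (h : StarD sZ a b A B t t') (s : ℤ × ℤ × ℤ) (f : ℂ[X]) :
    sZ (W a b A B t t' s f) = Haar22.zp A a s.2.2 * Polynomial.aeval (b * B) (f.map (starRingEnd ℂ)) *
      (Haar22.zp B b s.2.1 * Haar22.zp t' t s.1) := by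
  rw [W_apply, h.mul, h.mul, h.mul, h.zp h.st h.st', h.zp h.sb h.sB, h.zp h.sa h.sA, h.aeval]

def Cj (c : ℂ) : ℤ → ℂ[X] → ℂ[X]
  | .ofNat n => (Up c)^[n]
  | .negSucc n => (Dn c)^[n + 1]

theorem conj_zp (hp : p ≠ 0) (n : Nice p a b A B t t') (m : ℤ) (G : ℂ[X]) :
    zp A a m * (aeval (b * B) G * zp a A m) = aeval (b * B) (Cj (p * p) m G) := by
  cases m with
  | ofNat m => exact conj_up_pow n m G
  | negSucc m => exact conj_dn_pow hp n (m + 1) G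

theorem diag (hp : p ≠ 0) (n : Nice p a b A B t t') (h : StarD sZ a b A B t t') (s : ℤ × ℤ × ℤ) (f : ℂ[X]) :
    sZ (W a b A B t t' s f) * W a b A B t t' s f = 
      aeval (b * B) (Cj (p * p) s.2.2 (f.map (starRingEnd ℂ) * (X ^ s.2.1.natAbs * f))) := by
  rw [h.W, W_apply, ← conj_zp hp n, map_mul, map_mul, map_pow, aeval_X, ← zp_bB n]
  have := zp_inv n.tt n.tt' s.1
  calc _ = zp A a s.2.2 * (aeval (b * B)) (f.map (starRingEnd ℂ)) * (zp B b s.2.1 *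
        ((zp t' t s.1 * zp t t' s.1) * (zp b B s.2.1 * (aeval (b * B) f * zp a A s.2.2)))) := by
        simp only [mul_assoc]
    _ = _ := by rw [this, one_mul]; simp only [mul_assoc]

theorem T_W (T : S →ₐ[ℂ] S) {u v w : ℂ} (hu : u ≠ 0) (hv : v ≠ 0) (hw : w ≠ 0) (ha : T a = u • a)
    (hA : T A = u⁻¹ • A) (hb : T b = v • b) (hB : T B = v⁻¹ • B)
    (ht : T t = w • t) (ht' : T t' = w⁻¹ • t') (s : ℤ × ℤ × ℤ) (f : ℂ[X]) :
    T (W a b A B t t' s f) = (w ^ s.1 * v ^ s.2.1 * u ^ s.2.2) • W a b A B t t' s f := by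
  have hx : T (b * B) = b * B := by
    rw [map_mul, hb, hB, smul_mul_smul_comm, mul_inv_cancel₀ hv, one_smul]
  rw [W_apply, map_mul, map_mul, map_mul, T_zp T ht ht', T_zp T hb hB, T_zp T ha hA,
    ← aeval_algHom_apply, hx]
  simp only [smul_mul_assoc, mul_smul_comm, smul_smul]
  congr 1; ring

theorem T_sW (h : StarD sZ a b A B t t') (T : S →ₐ[ℂ] S) {u v w : ℂ} (hu : u ≠ 0) (hv : v ≠ 0) (hw : w ≠ 0) (ha : T a = u • a)
    (hA : T A = u⁻¹ • A) (hb : T b = v • b) (hB : T B = v⁻¹ • B)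
    (ht : T t = w • t) (ht' : T t' = w⁻¹ • t') (s : ℤ × ℤ × ℤ) (f : ℂ[X]) :
    T (sZ (W a b A B t t' s f)) = (w ^ s.1 * v ^ s.2.1 * u ^ s.2.2)⁻¹ • sZ (W a b A B t t' s f) := by
  have hx : T (b * B) = b * B := by
    rw [map_mul, hb, hB, smul_mul_smul_comm, mul_inv_cancel₀ hv, one_smul]
  rw [h.W, map_mul, map_mul, map_mul, T_zp T ht' (by rwa [inv_inv]), T_zp T hB (by rwa [inv_inv]),
    T_zp T hA (by rwa [inv_inv]), ← aeval_algHom_apply, hx]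
  simp only [smul_mul_assoc, mul_smul_comm, smul_smul]
  congr 1; simp only [inv_zpow, mul_inv]
end abs

theorem Cj_nonneg {r : ℝ} (hr : 0 < r) {S : Set ℝ} (hS : Supp r S) (m : ℤ) (G : ℂ[X])
    (hG : ∀ x ∈ S, 0 ≤ G.eval (x : ℂ)) : ∀ x ∈ S, 0 ≤ (Cj (r : ℂ) m G).eval (x : ℂ) := by
  have hup : ∀ G : ℂ[X], (∀ x ∈ S, 0 ≤ G.eval (x : ℂ)) → ∀ x ∈ S, 0 ≤ (Up (r : ℂ) G).eval (x : ℂ) := by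
    intro G hG x hx
    have e : (Up (r : ℂ) G).eval (x : ℂ) = ((1 - r * x : ℝ) : ℂ) * G.eval ((r * x : ℝ) : ℂ) := by
      simp [Up]
    rw [e]
    rcases hS.up x hx with h | h
    · rw [h]; simp
    · refine mul_nonneg ?_ (hG _ h)
      have := hS.le2 x hx
      exact_mod_cast (by linarith : 0 ≤ 1 - r * x)
  have hdn : ∀ G : ℂ[X], (∀ x ∈ S, 0 ≤ G.eval (x : ℂ)) → ∀ x ∈ S, 0 ≤ (Dn (r : ℂ) G).eval (x : ℂ) := by
    intro G hG x hx
    have e : (Dn (r : ℂ) G).eval (x : ℂ) = ((1 - x : ℝ) : ℂ) * G.eval ((r⁻¹ * x : ℝ) : ℂ) := by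
      simp [Dn]
    rw [e]
    rcases hS.dn x hx with h | h
    · rw [h]; simp
    · refine mul_nonneg ?_ (hG _ h)
      have := hS.le x hx
      exact_mod_cast (by linarith : 0 ≤ 1 - x)
  have it : ∀ F : ℂ[X] → ℂ[X], (∀ G : ℂ[X], (∀ x ∈ S, 0 ≤ G.eval (x : ℂ)) → ∀ x ∈ S, 0 ≤ (F G).eval (x : ℂ)) →
      ∀ n : ℕ, ∀ x ∈ S, 0 ≤ (F^[n] G).eval (x : ℂ) := by
    intro F hF n
    induction n with
    | zero => exact hG
    | succ n ih => rw [Function.iterate_succ_apply']; exact hF _ ih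
  cases m with
  | ofNat n => exact it _ hup n
  | negSucc n => exact it _ hdn (n + 1)

theorem sq_nonneg' {S : Set ℝ} {r : ℝ} (hS : Supp r S) (f : ℂ[X]) (k : ℕ) :
    ∀ x ∈ S, 0 ≤ (f.map (starRingEnd ℂ) * (X ^ k * f)).eval (x : ℂ) := by
  intro x hx
  have e : (f.map (starRingEnd ℂ)).eval (x : ℂ) = (starRingEnd ℂ) (f.eval (x : ℂ)) := by
    have := Polynomial.eval_map_apply (starRingEnd ℂ) (x : ℂ) (p := f)
    rwa [Complex.conj_ofReal] at this
  rw [eval_mul, eval_mul, eval_pow, eval_X, e]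
  have h0 := hS.nn x hx
  have : (starRingEnd ℂ) (f.eval (x : ℂ)) * ((x : ℂ) ^ k * f.eval (x : ℂ)) =
      ((x ^ k * Complex.normSq (f.eval (x : ℂ)) : ℝ) : ℂ) := by
    rw [Complex.ofReal_mul, Complex.normSq_eq_conj_mul_self]; push_cast; ring
  rw [this]
  exact_mod_cast mul_nonneg (pow_nonneg h0 k) (Complex.normSq_nonneg _)
end Haar22

namespace Haar22
set_option linter.unusedSimpArgs false
set_option linter.unusedVariables false
set_option linter.unusedSectionVars false
open Polynomial

section
variable {q : ℝ} (hq : (q : ℂ) ≠ 0) {sZ : Z (q : ℂ) → Z (q : ℂ)}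

abbrev WW (q : ℂ) (s : ℤ × ℤ × ℤ) : ℂ[X] →ₗ[ℂ] Z q := W (za q) (zb q) (zA q) (zB q) (zt q) (zt' q) s

theorem T_pair (h : StarD sZ (za (q : ℂ)) (zb (q : ℂ)) (zA (q : ℂ)) (zB (q : ℂ)) (zt (q : ℂ)) (zt' (q : ℂ)))
    {u v w : ℂ} (hu : u ≠ 0) (hv : v ≠ 0) (hw : w ≠ 0) (s s' : ℤ × ℤ × ℤ) (f g : ℂ[X]) :
    Tt hq hu hv hw (sZ (WW q s f) * WW q s' g) =
      ((w ^ s.1 * v ^ s.2.1 * u ^ s.2.2)⁻¹ * (w ^ s'.1 * v ^ s'.2.1 * u ^ s'.2.2)) •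
        (sZ (WW q s f) * WW q s' g) := by
  have ha := Tt_a hq hu hv hw
  have hA := Tt_A hq hu hv hw
  have hb := Tt_b hq hu hv hw
  have hB := Tt_B hq hu hv hw
  have ht := Tt_t hq hu hv hw
  have ht' := Tt_t' hq hu hv hw
  rw [map_mul, T_sW h _ hu hv hw ha hA hb hB ht ht', T_W _ hu hv hw ha hA hb hB ht ht',
    smul_mul_smul_comm]

theorem zpow_pair {m m' : ℤ} (h : m ≠ m') : ((2 : ℂ) ^ m)⁻¹ * 2 ^ m' ≠ 1 := by
  have := two_zpow (j := m' - m) (by omega)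
  rw [zpow_sub₀ two_ne_zero] at this
  rwa [mul_comm, ← div_eq_mul_inv]

theorem orth (h : StarD sZ (za (q : ℂ)) (zb (q : ℂ)) (zA (q : ℂ)) (zB (q : ℂ)) (zt (q : ℂ)) (zt' (q : ℂ)))
    {s s' : ℤ × ℤ × ℤ} (hs : s ≠ s') (f g : ℂ[X]) : haar hq (sZ (WW q s f) * WW q s' g) = 0 := by
  have h2 : (2 : ℂ) ≠ 0 := two_ne_zero
  by_cases h1 : s.1 = s'.1
  · by_cases h3 : s.2.1 = s'.2.1
    · have h4 : s.2.2 ≠ s'.2.2 := fun e => hs (Prod.ext h1 (Prod.ext h3 e))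
      refine haar_eig hq _ _ _ (T_pair hq h h2 one_ne_zero one_ne_zero s s' f g) ?_
      simpa only [one_zpow, one_mul] using zpow_pair h4
    · refine haar_eig hq _ _ _ (T_pair hq h one_ne_zero h2 one_ne_zero s s' f g) ?_
      simpa only [one_zpow, one_mul, mul_one] using zpow_pair h3
  · refine haar_eig hq _ _ _ (T_pair hq h one_ne_zero one_ne_zero h2 s s' f g) ?_
    simpa only [one_zpow, one_mul, mul_one] using zpow_pair h1

theorem diag_nonneg (h : StarD sZ (za (q : ℂ)) (zb (q : ℂ)) (zA (q : ℂ)) (zB (q : ℂ)) (zt (q : ℂ)) (zt' (q : ℂ)))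
    (s : ℤ × ℤ × ℤ) (f : ℂ[X]) : 0 ≤ haar hq (sZ (WW q s f) * WW q s f) := by
  have hr : q ≠ 0 := by exact_mod_cast hq
  have hpos : 0 < q * q := mul_self_pos.2 hr
  have hp := neg_ne_zero.2 hq
  obtain ⟨S, hS, hL⟩ := exists_supp (q * q) hpos
    (haar hq ∘ₗ (aeval (zb (q : ℂ) * zB (q : ℂ))).toLinearMap) (by
      intro k
      rw [LinearMap.comp_apply, AlgHom.toLinearMap_apply, map_pow, aeval_X,
        (show Commute (zb (q : ℂ)) (zB (q : ℂ)) from (zNice hq).Bb.symm).mul_pow, haar_bB, qn_real])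
  rw [diag hp (zNice hq) h]
  have e : (-(q : ℂ)) * (-(q : ℂ)) = ((q * q : ℝ) : ℂ) := by push_cast; ring
  rw [e]
  exact hL _ (Cj_nonneg hpos hS _ _ (sq_nonneg' hS f _))

theorem haar_pos (h : StarD sZ (za (q : ℂ)) (zb (q : ℂ)) (zA (q : ℂ)) (zB (q : ℂ)) (zt (q : ℂ)) (zt' (q : ℂ)))
    (z : Z (q : ℂ)) : 0 ≤ haar hq (sZ z * z) := by
  have hz := NN_le_W (zNice hq) (z_mem_NN hq z)
  obtain ⟨F, hF, rfl⟩ := (Submodule.mem_iSup_iff_exists_finsupp _ _).1 hz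
  have hs : ∀ (I : Finset (ℤ × ℤ × ℤ)), sZ (∑ i ∈ I, F i) = ∑ i ∈ I, sZ (F i) := fun I =>
    map_sum (AddMonoidHom.mk' sZ h.add) _ _
  rw [Finsupp.sum, hs, Finset.sum_mul_sum, map_sum]
  refine Finset.sum_nonneg fun i hi => ?_
  rw [map_sum, Finset.sum_eq_single i]
  · obtain ⟨f, hf⟩ := hF i
    rw [← hf]; exact diag_nonneg hq h i f
  · intro j _ hj
    obtain ⟨f, hf⟩ := hF i
    obtain ⟨g, hg⟩ := hF j
    rw [← hf, ← hg]; exact orth hq h hj.symm f g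
  · intro hn; exact absurd hi hn

theorem mk_star (hsZadd : ∀ x y, sZ (x + y) = sZ x + sZ y)
    (hsZsmul : ∀ (c : ℂ) x, sZ (c • x) = (starRingEnd ℂ) c • sZ x)
    (hsZinv : ∀ x, sZ (sZ x) = x)
    (hsZmul : ∀ x y, sZ (x * y) = sZ y * sZ x)
    (hsZ11 : sZ (za q) = zA q) (hsZ12 : sZ (zb q) = zB q) (hsZt : sZ (zt q) = zt' q) :
    StarD sZ (za (q : ℂ)) (zb (q : ℂ)) (zA (q : ℂ)) (zB (q : ℂ)) (zt (q : ℂ)) (zt' (q : ℂ)) where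
  add := hsZadd
  smul := hsZsmul
  mul := hsZmul
  one := by
    have := hsZmul (sZ 1) 1
    rw [mul_one, hsZinv, mul_one] at this
    exact this.symm
  sa := hsZ11
  sA := by rw [← hsZ11, hsZinv]
  sb := hsZ12
  sB := by rw [← hsZ12, hsZinv]
  st := hsZt
  st' := by rw [← hsZt, hsZinv]
end
end Haar22

/-- Let `q` be a nonzero real number.  There exists a positive Haar measure on
`U_q(2,-2)`: a linear map `μ : U_q(2,-2) → ℂ` with `μ(1) = 1`,
`(id ⊗ μ) ∘ α = u ∘ μ` for the coaction `α`, and `μ(z*z) ≥ 0` for all `z`,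
where the star `sZ` is the *-structure of `U_q(2,-2)`. -/
theorem Uq22_positive_haar_measure (q : ℝ) (hq : q ≠ 0)
    -- the *-structure of `U_q(2,-2)`
    (sZ : GLq22 ℂ (q : ℂ) → GLq22 ℂ (q : ℂ))
    (hsZadd : ∀ x y, sZ (x + y) = sZ x + sZ y)
    (hsZsmul : ∀ (c : ℂ) x, sZ (c • x) = (starRingEnd ℂ) c • sZ x)
    (hsZinv : ∀ x, sZ (sZ x) = x)
    (hsZmul : ∀ x y, sZ (x * y) = sZ y * sZ x)
    (hsZ11 : sZ (zM ℂ (q : ℂ) 0 0) = zM ℂ (q : ℂ) 1 1 * tauE ℂ (q : ℂ))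
    (hsZ12 : sZ (zM ℂ (q : ℂ) 0 1) = (q : ℂ)⁻¹ • (zM ℂ (q : ℂ) 1 0 * tauE ℂ (q : ℂ)))
    (hsZ21 : sZ (zM ℂ (q : ℂ) 1 0) = (q : ℂ) • (tauE ℂ (q : ℂ) * zM ℂ (q : ℂ) 0 1))
    (hsZ22 : sZ (zM ℂ (q : ℂ) 1 1) = tauE ℂ (q : ℂ) * zM ℂ (q : ℂ) 0 0)
    (hsZt : sZ (tauE ℂ (q : ℂ)) =
      zM ℂ (q : ℂ) 0 0 * zM ℂ (q : ℂ) 1 1 + (q : ℂ)⁻¹ • (zM ℂ (q : ℂ) 0 1 * zM ℂ (q : ℂ) 1 0))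
    -- the coaction
    (α : GLq22 ℂ (q : ℂ) →ₐ[ℂ] GLq2 ℂ (q : ℂ) ⊗[ℂ] GLq22 ℂ (q : ℂ))
    (hα : ∀ i j : Fin 2,
      α (zM ℂ (q : ℂ) i j) = ∑ l : Fin 2, xM ℂ (q : ℂ) i l ⊗ₜ[ℂ] zM ℂ (q : ℂ) l j)
    (hατ : α (tauE ℂ (q : ℂ)) = tE ℂ (q : ℂ) ⊗ₜ[ℂ] tauE ℂ (q : ℂ)) :
    ∃ μ : GLq22 ℂ (q : ℂ) →ₗ[ℂ] ℂ,
      μ 1 = 1 ∧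
      (∀ z : GLq22 ℂ (q : ℂ),
        (TensorProduct.rid ℂ (GLq2 ℂ (q : ℂ)))
            (TensorProduct.map (LinearMap.id (M := GLq2 ℂ (q : ℂ))) μ (α z)) =
          algebraMap ℂ (GLq2 ℂ (q : ℂ)) (μ z)) ∧
      ∀ z : GLq22 ℂ (q : ℂ), 0 ≤ μ (sZ z * z) := by
  have hq' : (q : ℂ) ≠ 0 := by exact_mod_cast hq
  have hco : Haar22.Co (q := (q : ℂ)) α (xM ℂ (q : ℂ) 0 0) (xM ℂ (q : ℂ) 0 1) (xM ℂ (q : ℂ) 1 0)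
      (xM ℂ (q : ℂ) 1 1) (tE ℂ (q : ℂ)) :=
    { a := (hα 0 0).trans (Fin.sum_univ_two _)
      b := (hα 0 1).trans (Fin.sum_univ_two _)
      c := (hα 1 0).trans (Fin.sum_univ_two _)
      d := (hα 1 1).trans (Fin.sum_univ_two _)
      t := hατ }
  refine ⟨Haar22.haar hq', Haar22.haar_one hq', fun z => Haar22.Inv_all hq' hco z, fun z => ?_⟩
  exact Haar22.haar_pos hq' (Haar22.mk_star hsZadd hsZsmul hsZinv hsZmul hsZ11 hsZ12 hsZt) z

end
end

section
/- Let q be a nonzero real number. There exists a C*-norm on U_q(2,-2): a norm N on the *-algebra U_q(2,-2) with N(xy) ≤ N(x)N(y) and N(x*x) = N(x)² for all x, y. -/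
noncomputable section

namespace Uq

theorem generic {A : Type} [Ring A] [Algebra ℂ A] (sZ : A → A)
    {V : Type} [SeminormedAddCommGroup V] [InnerProductSpace ℂ V]
    (π : A →ₐ[ℂ] Module.End ℂ V)
    (hadj : ∀ x v w, inner ℂ (π x v) w = inner ℂ v (π (sZ x) w))
    (hinv : ∀ x, sZ (sZ x) = x)
    (hbd : ∀ x, ∃ C : ℝ, ∀ v, ‖π x v‖ ≤ C * ‖v‖)
    (hf : ∀ x, (∀ v, ‖π x v‖ = 0) → x = 0) :
    ∃ N : A → ℝ,
      (∀ x, 0 ≤ N x) ∧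
      (∀ x, N x = 0 → x = 0) ∧
      (∀ (c : ℂ) x, N (c • x) = ‖c‖ * N x) ∧
      (∀ x y, N (x + y) ≤ N x + N y) ∧
      (∀ x y, N (x * y) ≤ N x * N y) ∧
      (∀ x, N (sZ x * x) = N x ^ 2) := by
  let Φ : A → (V →L[ℂ] V) := fun x => (π x).mkContinuousOfExistsBound (hbd x)
  have hΦ : ∀ x v, Φ x v = π x v := fun x v => rfl
  have hmul : ∀ x y, ‖Φ (x * y)‖ ≤ ‖Φ x‖ * ‖Φ y‖ := by
    intro x y
    have : Φ (x * y) = Φ x * Φ y := by ext v; simp [hΦ]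
    rw [this]; exact norm_mul_le _ _
  have hle : ∀ x, ‖Φ x‖ ^ 2 ≤ ‖Φ (sZ x * x)‖ := by
    intro x
    have : ‖Φ x‖ ≤ √ ‖Φ (sZ x * x)‖ := by
      refine ContinuousLinearMap.opNorm_le_bound _ (Real.sqrt_nonneg _) fun v => ?_
      have h1 : ‖Φ x v‖ ^ 2 ≤ ‖Φ (sZ x * x)‖ * ‖v‖ ^ 2 := by
        have h2 : inner ℂ (Φ x v) (Φ x v) = inner ℂ v (Φ (sZ x * x) v) := by
          simp only [hΦ]; rw [hadj, map_mul]; rfl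
        have h3 : ‖inner ℂ (Φ x v) (Φ x v)‖ = ‖Φ x v‖ ^ 2 := by
          rw [inner_self_eq_norm_sq_to_K]; simp
        rw [← h3, h2]
        calc _ ≤ ‖v‖ * ‖Φ (sZ x * x) v‖ := norm_inner_le_norm _ _
          _ ≤ ‖v‖ * (‖Φ (sZ x * x)‖ * ‖v‖) := by
            gcongr; exact ContinuousLinearMap.le_opNorm _ _
          _ = _ := by ring
      rw [← Real.sqrt_sq (norm_nonneg v), ← Real.sqrt_mul (norm_nonneg _)]
      exact Real.le_sqrt_of_sq_le h1
    calc _ ≤ (√ ‖Φ (sZ x * x)‖) ^ 2 := by gcongr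
      _ = _ := Real.sq_sqrt (norm_nonneg _)
  have hstar : ∀ x, ‖Φ x‖ ≤ ‖Φ (sZ x)‖ := by
    intro x
    have h1 := (hle x).trans (hmul _ _)
    by_contra! h
    have : 0 ≤ ‖Φ (sZ x)‖ := norm_nonneg _
    nlinarith
  refine ⟨fun x => ‖Φ x‖, fun x => norm_nonneg _, ?_, ?_, ?_, hmul, ?_⟩
  · intro x hx
    apply hf
    intro v
    have h1 : ‖Φ x v‖ ≤ ‖Φ x‖ * ‖v‖ := (Φ x).le_opNorm v
    have hx' : ‖Φ x‖ = 0 := hx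
    rw [hx', zero_mul] at h1
    exact le_antisymm h1 (norm_nonneg _)
  · intro c x
    have : Φ (c • x) = c • Φ x := by ext v; simp [hΦ]
    simp only [this, norm_smul]
  · intro x y
    have : Φ (x + y) = Φ x + Φ y := by ext v; simp [hΦ]
    simp only [this]; exact norm_add_le _ _
  · intro x
    refine le_antisymm ?_ (hle x)
    have h1 := hmul (sZ x) x
    have h2 := hstar (sZ x)
    rw [hinv] at h2
    have := norm_nonneg (Φ x)
    show ‖Φ (sZ x * x)‖ ≤ ‖Φ x‖ ^ 2
    nlinarith

structure Rels {R : Type} [Ring R] [Algebra ℂ R] (q : ℂ) (a b c d t : R) : Prop where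
  r1 : b * a = -(q • (a * b))
  r2 : c * a = q • (a * c)
  r3 : d * b = q • (b * d)
  r4 : d * c = -(q • (c * d))
  r5 : b * c = -(c * b)
  r6 : a * d + d * a = (q - q⁻¹) • (b * c)
  r7 : a * t = -(t * a)
  r8 : d * t = -(t * d)
  r9 : b * t = -(t * b)
  r10 : c * t = -(t * c)
  r11 : (a * d + q⁻¹ • (b * c)) * t = 1

def Gens {R : Type} [Ring R] [Algebra ℂ R] (a b c d t : R) : Prop :=
  ∀ P : R → Prop, (∀ k : ℂ, P (algebraMap ℂ _ k)) → P a → P b → P c → P d → P t →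
    (∀ x y, P x → P y → P (x + y)) → (∀ x y, P x → P y → P (x * y)) → ∀ x, P x

abbrev GA (q : ℂ) := GLq22 ℂ q

abbrev mk (q : ℂ) : FreeAlgebra ℂ ZGen →ₐ[ℂ] GA q := RingQuot.mkAlgHom ℂ (GLq22Rel ℂ q)


theorem gens (q : ℂ) : Gens (mk q (Zf ℂ .z11)) (mk q (Zf ℂ .z12)) (mk q (Zf ℂ .z21))
    (mk q (Zf ℂ .z22)) (mk q (Zf ℂ .tau)) := by
  intro P h0 ha hb hc hd ht hadd hmul x
  obtain ⟨y, rfl⟩ := RingQuot.mkAlgHom_surjective ℂ (GLq22Rel ℂ q) x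
  induction y using FreeAlgebra.induction with
  | grade0 c => rw [AlgHom.commutes]; exact h0 c
  | grade1 g =>
    cases g
    · exact ha
    · exact hb
    · exact hc
    · exact hd
    · exact ht
  | mul x y hx hy => rw [map_mul]; exact hmul _ _ hx hy
  | add x y hx hy => rw [map_add]; exact hadd _ _ hx hy

theorem rels (q : ℂ) : Rels q (mk q (Zf ℂ .z11)) (mk q (Zf ℂ .z12)) (mk q (Zf ℂ .z21))
    (mk q (Zf ℂ .z22)) (mk q (Zf ℂ .tau)) where
  r1 := by
    have h := RingQuot.mkAlgHom_rel ℂ (GLq22Rel.r1 (k := ℂ) (q := q))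
    rw [map_mul, map_neg, map_smul, map_mul] at h
    exact h
  r2 := by
    have h := RingQuot.mkAlgHom_rel ℂ (GLq22Rel.r2 (k := ℂ) (q := q))
    rw [map_mul, map_smul, map_mul] at h
    exact h
  r3 := by
    have h := RingQuot.mkAlgHom_rel ℂ (GLq22Rel.r3 (k := ℂ) (q := q))
    rw [map_mul, map_smul, map_mul] at h
    exact h
  r4 := by
    have h := RingQuot.mkAlgHom_rel ℂ (GLq22Rel.r4 (k := ℂ) (q := q))
    rw [map_mul, map_neg, map_smul, map_mul] at h
    exact h
  r5 := by
    have h := RingQuot.mkAlgHom_rel ℂ (GLq22Rel.r5 (k := ℂ) (q := q))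
    rw [map_mul, map_neg, map_mul] at h
    exact h
  r6 := by
    have h := RingQuot.mkAlgHom_rel ℂ (GLq22Rel.r6 (k := ℂ) (q := q))
    rw [map_add, map_mul, map_mul, map_smul, map_mul] at h
    exact h
  r7 := by
    have h := RingQuot.mkAlgHom_rel ℂ (GLq22Rel.r7 (k := ℂ) (q := q))
    rw [map_mul, map_neg, map_mul] at h
    exact h
  r8 := by
    have h := RingQuot.mkAlgHom_rel ℂ (GLq22Rel.r8 (k := ℂ) (q := q))
    rw [map_mul, map_neg, map_mul] at h
    exact h
  r9 := by
    have h := RingQuot.mkAlgHom_rel ℂ (GLq22Rel.r9 (k := ℂ) (q := q))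
    rw [map_mul, map_neg, map_mul] at h
    exact h
  r10 := by
    have h := RingQuot.mkAlgHom_rel ℂ (GLq22Rel.r10 (k := ℂ) (q := q))
    rw [map_mul, map_neg, map_mul] at h
    exact h
  r11 := by
    have h := RingQuot.mkAlgHom_rel ℂ (GLq22Rel.r11 (k := ℂ) (q := q))
    rw [map_mul, map_add, map_smul, map_mul, map_mul, map_one] at h
    exact h

theorem lifts (q : ℂ) {B : Type} [Ring B] [Algebra ℂ B] (a b c d t : B) (h : Rels q a b c d t) :
    ∃ φ : GA q →ₐ[ℂ] B, φ (mk q (Zf ℂ .z11)) = a ∧ φ (mk q (Zf ℂ .z12)) = b ∧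
      φ (mk q (Zf ℂ .z21)) = c ∧ φ (mk q (Zf ℂ .z22)) = d ∧ φ (mk q (Zf ℂ .tau)) = t := by
  let g : ZGen → B := fun s => match s with
    | .z11 => a | .z12 => b | .z21 => c | .z22 => d | .tau => t
  have hg : ∀ s, FreeAlgebra.lift ℂ g (Zf ℂ s) = g s := fun s => by simp [Zf]
  let φ : GA q →ₐ[ℂ] B := RingQuot.liftAlgHom ℂ ⟨FreeAlgebra.lift ℂ g, by
    intro x y hxy
    cases hxy <;> simp only [map_mul, map_add, map_neg, map_smul, map_one, hg, g]
    · exact h.r1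
    · exact h.r2
    · exact h.r3
    · exact h.r4
    · exact h.r5
    · exact h.r6
    · exact h.r7
    · exact h.r8
    · exact h.r9
    · exact h.r10
    · exact h.r11⟩
  refine ⟨φ, ?_, ?_, ?_, ?_, ?_⟩ <;>
  · simp only [φ, mk]
    exact (RingQuot.liftAlgHom_mkAlgHom_apply _ _ _ _).trans (hg _)


def QC {R : Type} [Ring R] [Algebra ℂ R] (x y : R) : Prop := ∃ k : ℂ, x * y = k • (y * x)

section
variable {R : Type} [Ring R] [Algebra ℂ R]

theorem QC.mul {x y z : R} (h1 : QC x y) (h2 : QC x z) : QC x (y * z) := by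
  obtain ⟨k, hk⟩ := h1
  obtain ⟨l, hl⟩ := h2
  refine ⟨k * l, ?_⟩
  rw [← mul_assoc, hk, smul_mul_assoc, mul_assoc, hl, mul_smul_comm, smul_smul, mul_assoc]

theorem QC.pow {x y : R} (h1 : QC x y) (n : ℕ) : QC x (y ^ n) := by
  induction n with
  | zero => exact ⟨1, by simp⟩
  | succ n ih => rw [pow_succ]; exact ih.mul h1

theorem QC.neg {x y : R} (h1 : x * y = -(y * x)) : QC x y := ⟨-1, by simp [h1]⟩

theorem inv_anti {x : R} {T : Rˣ} (h1 : x * T = -(T * x)) :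
    x * (T⁻¹ : Rˣ) = -((T⁻¹ : Rˣ) * x) := by
  have : (T⁻¹ : Rˣ) * (x * T) * (T⁻¹ : Rˣ) = (T⁻¹ : Rˣ) * (-(T * x)) * (T⁻¹ : Rˣ) := by rw [h1]
  rw [mul_assoc, mul_assoc, Units.mul_inv, mul_one, mul_neg, ← mul_assoc, Units.inv_mul,
    one_mul] at this
  rw [this]; simp

theorem QC.zpow {x : R} {T : Rˣ} (h1 : x * T = -(T * x)) (n : ℤ) : QC x ((T ^ n : Rˣ) : R) := by
  have h2 := inv_anti h1
  obtain ⟨n, rfl | rfl⟩ := n.eq_nat_or_neg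
  · rw [zpow_natCast, Units.val_pow_eq_pow_val]
    exact (QC.neg h1).pow n
  · rw [zpow_neg, ← inv_zpow, zpow_natCast, Units.val_pow_eq_pow_val]
    exact (QC.neg h2).pow n

namespace Rels
variable {q : ℂ} {a b c d t : R} (h : Rels q a b c d t)

theorem adt (h : Rels q a b c d t) : a * d * t = t * (a * d) := by
  rw [mul_assoc, h.r8, mul_neg, ← mul_assoc, h.r7]; simp [mul_assoc]
theorem bct (h : Rels q a b c d t) : b * c * t = t * (b * c) := by
  rw [mul_assoc, h.r10, mul_neg, ← mul_assoc, h.r9]; simp [mul_assoc]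

def T (h : Rels q a b c d t) : Rˣ := ⟨t, a * d + q⁻¹ • (b * c), by
  have h1 := h.r11
  simp only [mul_add, add_mul, h.adt, h.bct, mul_smul_comm, smul_mul_assoc] at h1 ⊢
  exact h1, h.r11⟩

theorem T_val (h : Rels q a b c d t) : (h.T : R) = t := rfl

theorem qc_ab (h : Rels q a b c d t) (hq : q ≠ 0) : QC a b :=
  ⟨-q⁻¹, by rw [h.r1]; simp [smul_smul, hq]⟩
theorem qc_ab' (h : Rels q a b c d t) (hq : q ≠ 0) : QC a (c * t) :=
  QC.mul ⟨q⁻¹, by rw [h.r2]; simp [smul_smul, hq]⟩ (QC.neg h.r7)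
theorem qc_db (h : Rels q a b c d t) : QC d b := ⟨q, h.r3⟩
theorem qc_dc (h : Rels q a b c d t) : QC d c := ⟨-q, by rw [h.r4, neg_smul]⟩

theorem qc_mul_left {x y z : R} (h1 : QC x z) (h2 : QC y z) : QC (x * y) z := by
  obtain ⟨k, hk⟩ := h1
  obtain ⟨l, hl⟩ := h2
  refine ⟨k * l, ?_⟩
  rw [mul_assoc, hl, mul_smul_comm, ← mul_assoc, hk, smul_mul_assoc, smul_smul, mul_assoc, mul_comm]

theorem qc_tb (h : Rels q a b c d t) : QC t b := QC.neg (by rw [h.r9, neg_neg])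
theorem qc_tc (h : Rels q a b c d t) : QC t c := QC.neg (by rw [h.r10, neg_neg])
theorem qc_tt : QC t t := ⟨1, by simp⟩

theorem bb' (h : Rels q a b c d t) : (c * t) * b = b * (c * t) := by
  rw [mul_assoc, ← neg_neg (t * b), ← h.r9, mul_neg, ← mul_assoc, ← neg_mul, ← h.r5, mul_assoc]

theorem aa' (h : Rels q a b c d t) : a * (d * t) = 1 - q⁻¹ • (b * (c * t)) := by
  rw [← h.r11, add_mul, smul_mul_assoc, mul_assoc, mul_assoc, add_sub_cancel_right]

theorem a'a (h : Rels q a b c d t) : (d * t) * a = 1 - q • (b * (c * t)) := by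
  have h1 : d * a = (q - q⁻¹) • (b * c) - a * d := by rw [← h.r6]; abel
  have : d * t * a = - (d * a * t) := by
    rw [mul_assoc, mul_assoc, h.r7, mul_neg, neg_neg]
  rw [this, h1, sub_mul, smul_mul_assoc, mul_assoc, mul_assoc, h.aa', sub_smul]
  abel

def Am (_h : Rels q a b c d t) (i : ℤ) : R := a ^ i.toNat * (d * t) ^ (-i).toNat

theorem a_Am (h : Rels q a b c d t) (i : ℤ) : a * h.Am i = h.Am (i + 1) ∨
    a * h.Am i = h.Am (i + 1) - q⁻¹ • (b * (c * t) * h.Am (i + 1)) := by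
  obtain hi | hi := le_or_gt 0 i
  · left
    obtain ⟨n, rfl⟩ := Int.eq_ofNat_of_zero_le hi
    have e1 : (-(n : ℤ)).toNat = 0 := by omega
    have e2 : (-((n : ℤ) + 1)).toNat = 0 := by omega
    have e3 : ((n : ℤ) + 1).toNat = n + 1 := by omega
    simp only [Am, e1, e2, e3, Int.toNat_natCast, pow_zero, mul_one, pow_succ']
  · right
    obtain ⟨n, rfl⟩ : ∃ n : ℕ, i = -(n : ℤ) - 1 := ⟨(-i-1).toNat, by omega⟩
    have e1 : (-(n : ℤ) - 1).toNat = 0 := by omega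
    have e2 : (-(-(n : ℤ) - 1)).toNat = n + 1 := by omega
    have e3 : (-(n : ℤ) - 1 + 1).toNat = 0 := by omega
    have e4 : (-(-(n : ℤ) - 1 + 1)).toNat = n := by omega
    simp only [Am, e1, e2, e3, e4, pow_zero, one_mul, pow_succ']
    rw [← mul_assoc, h.aa', sub_mul, one_mul, smul_mul_assoc]

theorem a'_Am (h : Rels q a b c d t) (i : ℤ) : (d * t) * h.Am i = h.Am (i - 1) ∨
    (d * t) * h.Am i = h.Am (i - 1) - q • (b * (c * t) * h.Am (i - 1)) := by
  obtain hi | hi := le_or_gt i 0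
  · left
    obtain ⟨n, rfl⟩ : ∃ n : ℕ, i = -(n : ℤ) := ⟨(-i).toNat, by omega⟩
    have e1 : (-(n : ℤ)).toNat = 0 := by omega
    have e2 : (-(n : ℤ) - 1).toNat = 0 := by omega
    have e3 : (-(-(n : ℤ) - 1)).toNat = n + 1 := by omega
    have e4 : (-(-(n : ℤ))).toNat = n := by omega
    simp only [Am, e1, e2, e3, e4, pow_zero, one_mul, pow_succ']
  · right
    obtain ⟨n, rfl⟩ : ∃ n : ℕ, i = (n : ℤ) + 1 := ⟨(i-1).toNat, by omega⟩
    have e1 : ((n : ℤ) + 1).toNat = n + 1 := by omega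
    have e2 : (-((n : ℤ) + 1)).toNat = 0 := by omega
    have e3 : ((n : ℤ) + 1 - 1).toNat = n := by omega
    have e4 : (-((n : ℤ) + 1 - 1)).toNat = 0 := by omega
    simp only [Am, e1, e2, e3, e4, pow_zero, mul_one, pow_succ']
    rw [← mul_assoc, h.a'a, sub_mul, one_mul, smul_mul_assoc]

def L (h : Rels q a b c d t) (j k : ℕ) (l : ℤ) : R := b ^ j * (c * t) ^ k * ((h.T ^ l : Rˣ) : R)

def M (h : Rels q a b c d t) (p : ℤ × ℕ × ℕ × ℤ) : R := h.L p.2.1 p.2.2.1 p.2.2.2 * h.Am p.1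

theorem b_L (h : Rels q a b c d t) (j k : ℕ) (l : ℤ) : b * h.L j k l = h.L (j + 1) k l := by
  simp only [L, pow_succ', mul_assoc]

theorem b'_L (h : Rels q a b c d t) (j k : ℕ) (l : ℤ) : (c * t) * h.L j k l = h.L j (k + 1) l := by
  have : Commute (c * t) (b ^ j) := Commute.pow_right h.bb' j
  simp only [L, pow_succ', ← mul_assoc]
  have e : c * t * b ^ j = b ^ j * (c * t) := this
  rw [e]; simp only [mul_assoc]

theorem bb'_L (h : Rels q a b c d t) (j k : ℕ) (l : ℤ) :
    h.L j k l * (b * (c * t)) = h.L (j + 1) (k + 1) l := by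
  have e1 : Commute (b * (c * t)) (h.T : R) := by
    show b * (c * t) * t = t * (b * (c * t))
    rw [← mul_assoc, h.bct]; simp only [mul_assoc]
    congr 1
    rw [← mul_assoc b, h.bct]
  have e2 : Commute (b * (c * t)) ((h.T ^ l : Rˣ) : R) := e1.units_zpow_right l
  have hb : Commute (c * t) b := h.bb'
  have e3 : Commute (b * (c * t)) (b ^ j) := Commute.pow_right (Commute.mul_left (Commute.refl _) hb) _
  have e4 : Commute (b * (c * t)) ((c * t) ^ k) :=
    Commute.pow_right (Commute.mul_left hb.symm (Commute.refl _)) _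
  have e5 : Commute (b * (c * t)) (h.L j k l) := (e3.mul_right e4).mul_right e2
  rw [← e5.eq, mul_assoc, h.b'_L, h.b_L]

theorem t_L (h : Rels q a b c d t) (j k : ℕ) (l : ℤ) (e : ℤ) (he : e = 1 ∨ e = -1) :
    ∃ z : ℂ, ((h.T ^ e : Rˣ) : R) * h.L j k l = z • h.L j k (l + e) := by
  have hx : QC ((h.T ^ e : Rˣ) : R) b ∧ QC ((h.T ^ e : Rˣ) : R) (c * t) := by
    have htt : QC ((h.T ^ e : Rˣ) : R) t := ⟨1, by
      rw [one_smul]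
      exact ((Commute.refl (h.T : R)).units_zpow_right e).eq.symm⟩
    rcases he with rfl | rfl
    · simp only [zpow_one, T_val]
      exact ⟨h.qc_tb, h.qc_tc.mul qc_tt⟩
    · rw [zpow_neg_one] at htt ⊢
      refine ⟨QC.neg ?_, (QC.neg ?_).mul htt⟩
      · rw [inv_anti (T := h.T) h.r9, neg_neg]
      · rw [inv_anti (T := h.T) h.r10, neg_neg]
  obtain ⟨z, hz⟩ := (hx.1.pow j).mul (hx.2.pow k)
  refine ⟨z, ?_⟩
  simp only [L]
  rw [← mul_assoc, hz, smul_mul_assoc, mul_assoc, ← Units.val_mul, ← zpow_add, add_comm]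

theorem span_top (h : Rels q a b c d t) (hq : q ≠ 0) (hg : Gens a b c d t) :
    Submodule.span ℂ (Set.range h.M) = ⊤ := by
  set S := Submodule.span ℂ (Set.range h.M) with hS
  have hM : ∀ j k l i, h.L j k l * h.Am i ∈ S := fun j k l i =>
    Submodule.subset_span ⟨(i, j, k, l), rfl⟩
  have key : ∀ x : R, (∀ j k l i, x * (h.L j k l * h.Am i) ∈ S) → ∀ y ∈ S, x * y ∈ S := by
    intro x hx y hy
    induction hy using Submodule.span_induction with
    | mem y hy => obtain ⟨p, rfl⟩ := hy; exact hx _ _ _ _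
    | zero => simp
    | add y z _ _ hy hz => rw [mul_add]; exact S.add_mem hy hz
    | smul k y _ hy => rw [mul_smul_comm]; exact S.smul_mem _ hy
  have hb : ∀ y ∈ S, b * y ∈ S := key b fun j k l i => by
    rw [← mul_assoc, h.b_L]; exact hM _ _ _ _
  have hb' : ∀ y ∈ S, (c * t) * y ∈ S := key _ fun j k l i => by
    rw [← mul_assoc, h.b'_L]; exact hM _ _ _ _
  have ht : ∀ e : ℤ, (e = 1 ∨ e = -1) → ∀ y ∈ S, ((h.T ^ e : Rˣ) : R) * y ∈ S := fun e he => key _ fun j k l i => by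
    obtain ⟨z, hz⟩ := h.t_L j k l e he
    rw [← mul_assoc, hz, smul_mul_assoc]; exact S.smul_mem _ (hM _ _ _ _)
  have hA : ∀ x : R, ∀ z : ℂ, ∀ e : ℤ, (∀ j k l, QC x (h.L j k l)) →
      (∀ i, x * h.Am i = h.Am (i + e) ∨
        x * h.Am i = h.Am (i + e) - z • (b * (c * t) * h.Am (i + e))) →
      ∀ y ∈ S, x * y ∈ S := by
    intro x z e hx hi
    refine key _ fun j k l i => ?_
    obtain ⟨w, hw⟩ := hx j k l
    rw [← mul_assoc, hw, smul_mul_assoc, mul_assoc]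
    refine S.smul_mem _ ?_
    rcases hi i with hi | hi
    · rw [hi]; exact hM _ _ _ _
    · rw [hi, mul_sub, mul_smul_comm, ← mul_assoc, h.bb'_L]
      exact S.sub_mem (hM _ _ _ _) (S.smul_mem _ (hM _ _ _ _))
  have ha : ∀ y ∈ S, a * y ∈ S := by
    refine hA a q⁻¹ 1 (fun j k l => ?_) h.a_Am
    exact (((h.qc_ab hq).pow _).mul ((h.qc_ab' hq).pow _)).mul (QC.zpow h.r7 l)
  have ha' : ∀ y ∈ S, (d * t) * y ∈ S := by
    refine hA _ q (-1) (fun j k l => ?_) h.a'_Am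
    refine (((qc_mul_left h.qc_db h.qc_tb).pow _).mul
      ((qc_mul_left (h.qc_dc.mul (QC.neg h.r8)) (h.qc_tc.mul qc_tt)).pow _)).mul (QC.zpow ?_ l)
    rw [T_val, h.r8]; simp [mul_assoc, h.r8]
  have h1 : (1 : R) ∈ S := by simpa [L, Am] using hM 0 0 0 0
  have hall : ∀ x : R, ∀ y ∈ S, x * y ∈ S := by
    refine hg _ ?_ ha hb ?_ ?_ ?_ ?_ ?_
    · intro k y hy
      rw [← Algebra.smul_def]; exact S.smul_mem _ hy
    · intro y hy
      have : c * y = (c * t) * (((h.T ^ (-1 : ℤ) : Rˣ) : R) * y) := by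
        rw [← mul_assoc, mul_assoc c, zpow_neg_one]
        exact (by rw [h.T.mul_inv, mul_one] : c * y = c * (h.T * ((h.T⁻¹ : Rˣ) : R)) * y)
      rw [this]; exact hb' _ (ht (-1) (by simp) _ hy)
    · intro y hy
      have : d * y = (d * t) * (((h.T ^ (-1 : ℤ) : Rˣ) : R) * y) := by
        rw [← mul_assoc, mul_assoc d, zpow_neg_one]
        exact (by rw [h.T.mul_inv, mul_one] : d * y = d * (h.T * ((h.T⁻¹ : Rˣ) : R)) * y)
      rw [this]; exact ha' _ (ht (-1) (by simp) _ hy)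
    · intro y hy
      simpa [T_val] using ht 1 (by simp) y hy
    · intro x y hx hy z hz
      rw [add_mul]; exact S.add_mem (hx _ hz) (hy _ hz)
    · intro x y hx hy z hz
      rw [mul_assoc]; exact hx _ (hy _ hz)
  rw [eq_top_iff]
  intro x _
  simpa using hall x 1 h1

end Rels
end

abbrev SS := ℤ × ℕ × ℤ × ℤ
abbrev VV := SS →₀ ℂ

def sh (σ : SS → SS) (α : SS → ℂ) : Module.End ℂ VV :=
  Finsupp.linearCombination ℂ (fun s => Finsupp.single (σ s) (α s))

theorem sh_single (σ : SS → SS) (α : SS → ℂ) (s : SS) (k : ℂ) :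
    sh σ α (Finsupp.single s k) = Finsupp.single (σ s) (k * α s) := by
  simp [sh]

def sg (l : ℤ) : ℂ := (-1) ^ l

theorem sg_add (l : ℤ) : sg (l + 1) = - sg l := by
  simp [sg, zpow_add₀]
theorem sg_sub (l : ℤ) : sg (l - 1) = - sg l := by
  simp [sg, zpow_sub₀, div_neg]
theorem sg_sq (l : ℤ) : sg l * sg l = 1 := by
  simp only [sg, ← mul_zpow]; simp
theorem sg_sq' (l : ℤ) : sg l ^ 2 = 1 := by rw [sq, sg_sq]
theorem sg_conj (l : ℤ) : (starRingEnd ℂ) (sg l) = sg l := by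
  simp [sg]
theorem sg_ne (l : ℤ) : sg l ≠ 0 := by
  simp [sg, zpow_ne_zero]

def oa (f : ℤ → ℕ → ℂ) : Module.End ℂ VV :=
  sh (fun s => (s.1 + 1, s.2.1, s.2.2.1, s.2.2.2)) (fun s => sg s.2.2.2 * f s.1 s.2.1)
def ob (y : ℤ → ℕ → ℂ) : Module.End ℂ VV :=
  sh (fun s => (s.1, s.2.1, s.2.2.1 + 1, s.2.2.2)) (fun s => sg s.2.2.2 * y s.1 s.2.1)
def oc (q : ℂ) (y : ℤ → ℕ → ℂ) : Module.End ℂ VV :=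
  sh (fun s => (s.1, s.2.1, s.2.2.1 - 1, s.2.2.2 - 1)) (fun s => -(q * sg s.2.2.2 * y s.1 s.2.1))
def od (f : ℤ → ℕ → ℂ) : Module.End ℂ VV :=
  sh (fun s => (s.1 - 1, s.2.1, s.2.2.1, s.2.2.2 - 1)) (fun s => -(sg s.2.2.2 * f (s.1 - 1) s.2.1))
def ot : Module.End ℂ VV :=
  sh (fun s => (s.1, s.2.1, s.2.2.1, s.2.2.2 + 1)) (fun _ => 1)

theorem orels (q : ℂ) (hq : q ≠ 0) (y f : ℤ → ℕ → ℂ) (hy : ∀ n t, y (n + 1) t = - q * y n t)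
    (hf : ∀ n t, f n t ^ 2 = 1 - q ^ 2 * y n t ^ 2) :
    Rels q (oa f) (ob y) (oc q y) (od f) ot := by
  have hy' : ∀ n t, y n t = -q * y (n - 1) t := fun n t => by
    rw [← hy, sub_add_cancel]
  have hf' : ∀ n t, f (n - 1) t ^ 2 = 1 - y n t ^ 2 := fun n t => by
    rw [hf, hy' n]; ring
  constructor <;> refine Finsupp.lhom_ext fun s k => ?_ <;> obtain ⟨n, t, m, l⟩ := s <;>
    simp only [Module.End.mul_apply, LinearMap.neg_apply, LinearMap.smul_apply,
      LinearMap.add_apply, oa, ob, oc, od, ot, sh_single, sg_add, sg_sub, hy, add_sub_cancel_right,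
      sub_add_cancel, ← Finsupp.single_neg, Finsupp.smul_single, smul_eq_mul, Module.End.one_apply,
      ← Finsupp.single_add]
  · congr 1; ring
  · congr 1; ring
  · rw [hy' n]; congr 1; ring
  · rw [hy' n]; congr 1; ring
  · congr 1; ring
  · congr 1
    have h1 := hf n t
    have h2 := hf' n t
    have h3 := sg_sq' l
    field_simp
    linear_combination k * sg l ^2 * h2 - k * sg l ^ 2 * h1
  · congr 1; ring
  · congr 1; ring
  · congr 1; ring
  · congr 1; ring
  · congr 1
    have h2 := hf' n t
    have h3 := sg_sq' l
    field_simp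
    linear_combination k * (sg l)^2 * h2 + k * h3

def bf (w : ℤ → ℕ → ℝ) (v v' : VV) : ℂ :=
  v.sum fun s k => (w s.1 s.2.1 : ℂ) * (starRingEnd ℂ) k * v' s

theorem bf_add_left (w : ℤ → ℕ → ℝ) (v1 v2 v' : VV) :
    bf w (v1 + v2) v' = bf w v1 v' + bf w v2 v' := by
  unfold bf
  rw [Finsupp.sum_add_index'] <;> intros <;> simp; ring

theorem bf_add_right (w : ℤ → ℕ → ℝ) (v v1 v2 : VV) :
    bf w v (v1 + v2) = bf w v v1 + bf w v v2 := by
  unfold bf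
  simp [mul_add]

theorem bf_smul_left (w : ℤ → ℕ → ℝ) (k : ℂ) (v v' : VV) :
    bf w (k • v) v' = (starRingEnd ℂ) k * bf w v v' := by
  unfold bf
  rw [Finsupp.sum_smul_index' (by simp), Finsupp.mul_sum]
  simp only [smul_eq_mul, map_mul]
  congr 1; ext; ring

theorem bf_single (w : ℤ → ℕ → ℝ) (s s' : SS) (k k' : ℂ) :
    bf w (Finsupp.single s k) (Finsupp.single s' k') =
      if s = s' then (w s.1 s.2.1 : ℂ) * (starRingEnd ℂ) k * k' else 0 := by
  unfold bf
  rw [Finsupp.sum_single_index (by simp), Finsupp.single_apply]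
  by_cases h : s = s'
  · simp [h]
  · simp [h, Ne.symm h]

theorem bf_symm (w : ℤ → ℕ → ℝ) (v v' : VV) : (starRingEnd ℂ) (bf w v' v) = bf w v v' := by
  induction v using Finsupp.induction_linear with
  | zero => simp [bf]
  | add v1 v2 h1 h2 => rw [bf_add_left, bf_add_right, map_add, h1, h2]
  | single s k =>
    induction v' using Finsupp.induction_linear with
    | zero => simp [bf]
    | add v1 v2 h1 h2 => rw [bf_add_left, bf_add_right, map_add, h1, h2]
    | single s' k' =>
      rw [bf_single, bf_single]
      by_cases h : s = s'
      · simp [h]; ring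
      · simp [h, Ne.symm h]

theorem bf_self (w : ℤ → ℕ → ℝ) (v : VV) :
    bf w v v = ((v.sum fun s k => w s.1 s.2.1 * ‖k‖ ^ 2 : ℝ) : ℂ) := by
  unfold bf Finsupp.sum
  push_cast
  refine Finset.sum_congr rfl fun s _ => ?_
  rw [mul_assoc, Complex.conj_mul']

@[reducible] def core (w : ℤ → ℕ → ℝ) (hw : ∀ n t, 0 ≤ w n t) : PreInnerProductSpace.Core ℂ VV where
  inner := bf w
  conj_inner_symm v v' := bf_symm w v v'
  re_inner_nonneg v := by
    rw [bf_self, RCLike.re_eq_complex_re, Complex.ofReal_re]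
    exact Finset.sum_nonneg fun s _ => mul_nonneg (hw _ _) (sq_nonneg _)
  add_left := bf_add_left w
  smul_left v v' k := bf_smul_left w k v v'

theorem adj_ext (w : ℤ → ℕ → ℝ) (X Y : Module.End ℂ VV)
    (h : ∀ s s' k k', bf w (X (Finsupp.single s k)) (Finsupp.single s' k') =
      bf w (Finsupp.single s k) (Y (Finsupp.single s' k'))) (v v' : VV) :
    bf w (X v) v' = bf w v (Y v') := by
  induction v using Finsupp.induction_linear with
  | zero => simp [bf]
  | add v1 v2 h1 h2 => rw [map_add, bf_add_left, bf_add_left, h1, h2]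
  | single s k =>
    induction v' using Finsupp.induction_linear with
    | zero => simp [bf]
    | add v1 v2 h1 h2 => rw [map_add, bf_add_right, bf_add_right, h1, h2]
    | single s' k' => exact h _ _ _ _

section
variable (q : ℝ) (hq : (q : ℂ) ≠ 0) (y f : ℤ → ℕ → ℂ) (w : ℤ → ℕ → ℝ)

theorem adj_a (hfw : ∀ n t, (starRingEnd ℂ) (f n t) * w (n + 1) t = f n t * w n t) (v v' : VV) :
    bf w (oa f v) v' = bf w v ((od f * ot) v') := by
  refine adj_ext w _ _ (fun s s' k k' => ?_) v v'
  obtain ⟨n, t, m, l⟩ := s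
  obtain ⟨n', t', m', l'⟩ := s'
  simp only [Module.End.mul_apply, oa, od, ot, sh_single, bf_single]
  by_cases h : (n + 1 = n' ∧ t = t' ∧ m = m' ∧ l = l')
  · obtain ⟨rfl, rfl, rfl, rfl⟩ := h
    simp [sg_add, sg_conj]
    linear_combination (starRingEnd ℂ) k * k' * sg l * hfw n t
  · rw [if_neg, if_neg]
    · simp only [Prod.mk.injEq]; grind
    · simp only [Prod.mk.injEq]; grind

theorem adj_b (hyc : ∀ n t, (starRingEnd ℂ) (y n t) = y n t) (hq : (q : ℂ) ≠ 0) (v v' : VV) :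
    bf w (ob y v) v' = bf w v (((q : ℂ)⁻¹ • (oc q y * ot)) v') := by
  refine adj_ext w _ _ (fun s s' k k' => ?_) v v'
  obtain ⟨n, t, m, l⟩ := s
  obtain ⟨n', t', m', l'⟩ := s'
  simp only [Module.End.mul_apply, LinearMap.smul_apply, Finsupp.smul_single, ob, oc, ot, sh_single, bf_single]
  by_cases h : (n = n' ∧ t = t' ∧ m + 1 = m' ∧ l = l')
  · obtain ⟨rfl, rfl, rfl, rfl⟩ := h
    simp [sg_add, sg_conj, hyc]
    field_simp
  · rw [if_neg, if_neg]
    · simp only [Prod.mk.injEq]; grind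
    · simp only [Prod.mk.injEq]; grind

theorem adj_c (hyc : ∀ n t, (starRingEnd ℂ) (y n t) = y n t) (v v' : VV) :
    bf w (oc q y v) v' = bf w v (((q : ℂ) • (ot * ob y)) v') := by
  refine adj_ext w _ _ (fun s s' k k' => ?_) v v'
  obtain ⟨n, t, m, l⟩ := s
  obtain ⟨n', t', m', l'⟩ := s'
  simp only [Module.End.mul_apply, LinearMap.smul_apply, Finsupp.smul_single, ob, oc, ot, sh_single, bf_single]
  by_cases h : (n = n' ∧ t = t' ∧ m = m' + 1 ∧ l = l' + 1)
  · obtain ⟨rfl, rfl, rfl, rfl⟩ := h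
    simp [sg_add, sg_conj, hyc]
    ring
  · rw [if_neg, if_neg]
    · simp only [Prod.mk.injEq]; grind
    · simp only [Prod.mk.injEq]; grind

theorem adj_d (hfw : ∀ n t, (starRingEnd ℂ) (f n t) * w (n + 1) t = f n t * w n t) (v v' : VV) :
    bf w (od f v) v' = bf w v ((ot * oa f) v') := by
  refine adj_ext w _ _ (fun s s' k k' => ?_) v v'
  obtain ⟨n, t, m, l⟩ := s
  obtain ⟨n', t', m', l'⟩ := s'
  simp only [Module.End.mul_apply, oa, od, ot, sh_single, bf_single]
  by_cases h : (n = n' + 1 ∧ t = t' ∧ m = m' ∧ l = l' + 1)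
  · obtain ⟨rfl, rfl, rfl, rfl⟩ := h
    have h2 := congrArg (starRingEnd ℂ) (hfw n' t)
    simp at h2
    simp [sg_add, sg_conj]
    linear_combination - (starRingEnd ℂ) k * k' * sg l' * h2
  · rw [if_neg, if_neg]
    · simp only [Prod.mk.injEq]; grind
    · simp only [Prod.mk.injEq]; grind

theorem adj_t (D : Module.End ℂ VV) (hD : D * ot = 1) (v v' : VV) :
    bf w (ot v) v' = bf w v (D v') := by
  have hs : ∀ s k, Finsupp.single s k =
      ot (Finsupp.single (s.1, s.2.1, s.2.2.1, s.2.2.2 - 1) k) := by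
    intro s k; simp [ot, sh_single]
  refine adj_ext w _ _ (fun s s' k k' => ?_) v v'
  have e : D (Finsupp.single s' k') = Finsupp.single (s'.1, s'.2.1, s'.2.2.1, s'.2.2.2 - 1) k' := by
    rw [hs s' k', ← Module.End.mul_apply, hD, Module.End.one_apply]
  rw [e]
  obtain ⟨n, t, m, l⟩ := s
  obtain ⟨n', t', m', l'⟩ := s'
  simp only [ot, sh_single, bf_single]
  by_cases h : (n = n' ∧ t = t' ∧ m = m' ∧ l + 1 = l')
  · obtain ⟨rfl, rfl, rfl, rfl⟩ := h
    simp
  · rw [if_neg, if_neg]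
    · simp only [Prod.mk.injEq]; grind
    · simp only [Prod.mk.injEq]; grind

end

section
variable {R : Type} [Ring R] [Algebra ℂ R] {q : ℂ} {a b c d t : R} (h : Rels q a b c d t)
  (y f : ℤ → ℕ → ℂ) (π : R →ₐ[ℂ] Module.End ℂ VV)

theorem pi_T (ht : π t = ot) (l : ℤ) (n : ℤ) (r : ℕ) (m l0 : ℤ) (k : ℂ) :
    π ((h.T ^ l : Rˣ) : R) (Finsupp.single (n, r, m, l0) k) = Finsupp.single (n, r, m, l0 + l) k := by
  have hn : ∀ (e : ℕ) (l0 : ℤ), π ((h.T ^ (e : ℤ) : Rˣ) : R) (Finsupp.single (n, r, m, l0) k) =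
      Finsupp.single (n, r, m, l0 + e) k := by
    intro e
    induction e with
    | zero => intro l0; simp
    | succ e ih =>
      intro l0
      have e1 : ((h.T ^ ((e + 1 : ℕ) : ℤ) : Rˣ) : R) = ((h.T ^ (e : ℤ) : Rˣ) : R) * t := by
        push_cast
        rw [zpow_add, Units.val_mul, zpow_one]; rfl
      rw [e1, map_mul, Module.End.mul_apply, ht, ot, sh_single, mul_one, ih]
      congr 4; push_cast; ring
  obtain ⟨e, rfl | rfl⟩ := l.eq_nat_or_neg
  · exact hn e l0
  · have := hn e (l0 + -e)
    rw [neg_add_cancel_right] at this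
    rw [← this, ← Module.End.mul_apply, ← map_mul, ← Units.val_mul, ← zpow_add]
    simp

theorem ob_pow (j : ℕ) (n : ℤ) (r : ℕ) (m l : ℤ) (k : ℂ) :
    (ob y ^ j) (Finsupp.single (n, r, m, l) k) =
      Finsupp.single (n, r, m + j, l) (k * (sg l * y n r) ^ j) := by
  induction j generalizing m k with
  | zero => simp
  | succ j ih =>
    rw [pow_succ, Module.End.mul_apply, ob, sh_single, ← ob, ih]
    congr 1
    · congr 3; push_cast; ring
    · ring

theorem ob'_pow (q : ℂ) (j : ℕ) (n : ℤ) (r : ℕ) (m l : ℤ) (k : ℂ) :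
    ((oc q y * ot) ^ j) (Finsupp.single (n, r, m, l) k) =
      Finsupp.single (n, r, m - j, l) (k * (q * (sg l * y n r)) ^ j) := by
  induction j generalizing m k with
  | zero => simp
  | succ j ih =>
    rw [pow_succ, Module.End.mul_apply, Module.End.mul_apply, oc, ot, sh_single, sh_single,
      ← ot, ← oc]
    simp only [add_sub_cancel_right, ih, sg_add]
    congr 1
    · congr 3; push_cast; ring
    · ring

theorem oa_pow (j : ℕ) (n : ℤ) (r : ℕ) (k : ℂ) : ∃ F : ℂ,
    (oa f ^ j) (Finsupp.single (n, r, 0, 0) k) = Finsupp.single (n + j, r, 0, 0) F ∧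
      (k ≠ 0 → (∀ e : ℤ, |e - n| ≤ j → f e r ≠ 0) → F ≠ 0) := by
  induction j generalizing n k with
  | zero => exact ⟨k, by simp, fun h _ => h⟩
  | succ j ih =>
    obtain ⟨F, h1, h2⟩ := ih (n + 1) (k * (sg 0 * f n r))
    refine ⟨F, ?_, fun hk hh => h2 ?_ ?_⟩
    · rw [pow_succ, Module.End.mul_apply, oa, sh_single, ← oa, h1]
      congr 2; push_cast; ring
    · exact mul_ne_zero hk (mul_ne_zero (sg_ne _) (hh n (by simp; positivity)))
    · intro e he
      refine hh e ?_
      rw [abs_le] at he ⊢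
      push_cast; constructor <;> linarith [he.1, he.2]

theorem oa'_pow (j : ℕ) (n : ℤ) (r : ℕ) (k : ℂ) : ∃ F : ℂ,
    ((od f * ot) ^ j) (Finsupp.single (n, r, 0, 0) k) = Finsupp.single (n - j, r, 0, 0) F ∧
      (k ≠ 0 → (∀ e : ℤ, |e - n| ≤ j → f e r ≠ 0) → F ≠ 0) := by
  induction j generalizing n k with
  | zero => exact ⟨k, by simp, fun h _ => h⟩
  | succ j ih =>
    obtain ⟨F, h1, h2⟩ := ih (n - 1) (k * (sg 0 * f (n - 1) r))
    refine ⟨F, ?_, fun hk hh => h2 ?_ ?_⟩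
    · rw [pow_succ, Module.End.mul_apply, Module.End.mul_apply, od, ot, sh_single, sh_single,
        ← ot, ← od]
      simp only [add_sub_cancel_right, sg_add, mul_one, neg_mul, neg_neg, h1]
      congr 2; push_cast; ring
    · exact mul_ne_zero hk (mul_ne_zero (sg_ne _) (hh (n - 1) (by simp)))
    · intro e he
      refine hh e ?_
      rw [abs_le] at he ⊢
      push_cast; constructor <;> linarith [he.1, he.2]

theorem pi_Am (ha : π a = oa f) (hd : π d = od f) (ht : π t = ot) (i n : ℤ) (r : ℕ) : ∃ F : ℂ,
    π (h.Am i) (Finsupp.single (n, r, 0, 0) 1) = Finsupp.single (n + i, r, 0, 0) F ∧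
      ((∀ e : ℤ, |e - n| ≤ |i| → f e r ≠ 0) → F ≠ 0) := by
  simp only [Rels.Am, map_mul, map_pow, ha, hd, ht]
  obtain ⟨j, rfl | rfl⟩ := i.eq_nat_or_neg
  · obtain ⟨F, h1, h2⟩ := oa_pow f j n r 1
    refine ⟨F, ?_, fun hh => h2 one_ne_zero fun e he => hh e (by simpa using he)⟩
    simpa using h1
  · obtain ⟨F, h1, h2⟩ := oa'_pow f j n r 1
    refine ⟨F, ?_, fun hh => h2 one_ne_zero fun e he => hh e (by simpa using he)⟩
    simpa [sub_eq_add_neg] using h1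

theorem faithful (h : Rels q a b c d t) (hq : q ≠ 0) (hg : Gens a b c d t) (w : ℤ → ℕ → ℝ)
    (ha : π a = oa f) (hb : π b = ob y) (hc : π c = oc q y) (hd : π d = od f) (ht : π t = ot)
    (hinf : ∀ K : ℤ, {Y : ℂ | ∃ N r, Y = y N r ∧ w N r ≠ 0 ∧
      ∀ e : ℤ, |e - N| ≤ K → f e r ≠ 0}.Infinite)
    (x : R) (hx : ∀ n r s, w s.1 s.2.1 ≠ 0 → (π x (Finsupp.single (n, r, 0, 0) 1)) s = 0) :
    x = 0 := by
  have hmem : x ∈ Submodule.span ℂ (Set.range h.M) := by rw [h.span_top hq hg]; trivial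
  obtain ⟨C, rfl⟩ := (Finsupp.mem_span_range_iff_exists_finsupp).1 hmem
  suffices hC : C = 0 by simp [hC]
  choose F hF1 hF2 using pi_Am h f π ha hd ht
  let z : ℤ × ℕ × ℕ × ℤ → ℂ := fun p => q ^ p.2.2.1 * sg p.2.2.2 ^ (p.2.1 + p.2.2.1)
  have hz : ∀ p, z p ≠ 0 := fun p => mul_ne_zero (pow_ne_zero _ hq) (pow_ne_zero _ (sg_ne _))
  have hM : ∀ p n r, π (h.M p) (Finsupp.single (n, r, 0, 0) 1) =
      Finsupp.single (n + p.1, r, (p.2.1 : ℤ) - p.2.2.1, p.2.2.2)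
        (F p.1 n r * z p * y (n + p.1) r ^ (p.2.1 + p.2.2.1)) := by
    intro p n r
    simp only [Rels.M, Rels.L, map_mul, map_pow, Module.End.mul_apply, hF1, pi_T h π ht, hb]
    rw [hc, ht, ob'_pow, ob_pow]
    congr 1
    · congr 3
      · ring
      · ring
    · simp only [z, zero_add]; ring
  ext p0
  obtain ⟨i0, j0, k0, l0⟩ := p0
  let cond : ℤ × ℕ × ℕ × ℤ → Prop := fun p =>
    p.1 = i0 ∧ (p.2.1 : ℤ) - p.2.2.1 = j0 - k0 ∧ p.2.2.2 = l0
  classical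
  let P : Polynomial ℂ := ∑ p ∈ C.support, if cond p then
    Polynomial.C (C p * z p) * Polynomial.X ^ (p.2.1 + p.2.2.1) else 0
  have hP : P = 0 := by
    refine Polynomial.eq_zero_of_infinite_isRoot P ((hinf (2 * |i0|)).mono ?_)
    rintro Y ⟨N, r, rfl, hw, hne⟩
    have h1 := hx (N - i0) r (N, r, (j0 : ℤ) - k0, l0) hw
    have hFne : F i0 (N - i0) r ≠ 0 := by
      refine hF2 _ _ _ fun e he => hne e ?_
      have : e - N = (e - (N - i0)) + (-i0) := by ring
      rw [this]
      refine (abs_add_le _ _).trans ?_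
      rw [abs_neg]; linarith
    have h2 : F i0 (N - i0) r * P.eval (y N r) = 0 := by
      rw [← h1]
      simp only [P, Finsupp.sum, map_sum, map_smul, LinearMap.sum_apply, LinearMap.smul_apply, hM,
        Finsupp.finsetSum_apply, Finsupp.smul_apply, Polynomial.eval_finsetSum, Finset.mul_sum]
      refine Finset.sum_congr rfl fun p _ => ?_
      by_cases hp : cond p
      · rw [if_pos hp]
        obtain ⟨e1, e2, e3⟩ := hp
        rw [e1, e2, e3, sub_add_cancel, Finsupp.single_eq_same]
        simp; ring
      · rw [if_neg hp, Finsupp.single_eq_of_ne]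
        · simp
        · intro he
          simp only [Prod.mk.injEq] at he
          exact hp ⟨by omega, by omega, by omega⟩
    exact (mul_eq_zero.1 h2).resolve_left hFne
  by_contra hne
  have hc0 := congrArg (fun Q => Polynomial.coeff Q (j0 + k0)) hP
  simp only [P, Polynomial.finsetSum_coeff, Polynomial.coeff_zero] at hc0
  rw [Finset.sum_eq_single (i0, j0, k0, l0)] at hc0
  · rw [if_pos (⟨rfl, rfl, rfl⟩ : cond (i0, j0, k0, l0)), Polynomial.coeff_C_mul,
      Polynomial.coeff_X_pow, if_pos rfl, mul_one] at hc0
    rcases mul_eq_zero.1 hc0 with h1 | h1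
    · exact hne (by simpa using h1)
    · exact hz _ h1
  · intro p _ hp
    by_cases hcp : cond p
    · rw [if_pos hcp, Polynomial.coeff_C_mul, Polynomial.coeff_X_pow, if_neg, mul_zero]
      intro he
      apply hp
      obtain ⟨e1, e2, e3⟩ := hcp
      obtain ⟨i, j, k, l⟩ := p
      simp only at e1 e2 e3 he
      simp only [Prod.mk.injEq]
      omega
    · rw [if_neg hcp, Polynomial.coeff_zero]
  · intro hp
    exact absurd (by simpa using hp) hne
end

theorem main {R : Type} [Ring R] [Algebra ℂ R] {q : ℝ} {a b c d t : R}
    (h : Rels (q : ℂ) a b c d t) (hq : (q : ℂ) ≠ 0) (hg : Gens a b c d t)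
    (y f : ℤ → ℕ → ℂ) (w : ℤ → ℕ → ℝ) (hw : ∀ n t, 0 ≤ w n t)
    (hyc : ∀ n t, (starRingEnd ℂ) (y n t) = y n t)
    (hfw : ∀ n t, (starRingEnd ℂ) (f n t) * w (n + 1) t = f n t * w n t)
    (hinf : ∀ K : ℤ, {Y : ℂ | ∃ N r, Y = y N r ∧ w N r ≠ 0 ∧
      ∀ e : ℤ, |e - N| ≤ K → f e r ≠ 0}.Infinite)
    (π : R →ₐ[ℂ] Module.End ℂ VV)
    (ha : π a = oa f) (hb : π b = ob y) (hc : π c = oc q y) (hd : π d = od f) (ht : π t = ot)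
    (sZ : R → R)
    (hsZadd : ∀ x y, sZ (x + y) = sZ x + sZ y)
    (hsZsmul : ∀ (c : ℂ) x, sZ (c • x) = (starRingEnd ℂ) c • sZ x)
    (hsZinv : ∀ x, sZ (sZ x) = x)
    (hsZmul : ∀ x y, sZ (x * y) = sZ y * sZ x)
    (hsZ11 : sZ a = d * t)
    (hsZ12 : sZ b = (q : ℂ)⁻¹ • (c * t))
    (hsZ21 : sZ c = (q : ℂ) • (t * b))
    (hsZ22 : sZ d = t * a)
    (hsZt : sZ t = a * d + (q : ℂ)⁻¹ • (b * c)) :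
    ∃ N : R → ℝ,
      (∀ x, 0 ≤ N x) ∧
      (∀ x, N x = 0 → x = 0) ∧
      (∀ (c : ℂ) x, N (c • x) = ‖c‖ * N x) ∧
      (∀ x y, N (x + y) ≤ N x + N y) ∧
      (∀ x y, N (x * y) ≤ N x * N y) ∧
      (∀ x, N (sZ x * x) = N x ^ 2) := by
  have hs1 : sZ 1 = 1 := by
    have h1 := hsZmul 1 (sZ 1)
    rw [one_mul, hsZinv, one_mul] at h1
    exact h1.symm
  have hadj : ∀ x v v', bf w (π x v) v' = bf w v (π (sZ x) v') := by
    refine hg _ ?_ ?_ ?_ ?_ ?_ ?_ ?_ ?_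
    · intro k v v'
      rw [Algebra.algebraMap_eq_smul_one, hsZsmul, hs1, map_smul, map_smul, map_one]
      simp only [LinearMap.smul_apply, Module.End.one_apply]
      rw [bf_smul_left, ← bf_symm w v (_ • v'), bf_smul_left, map_mul, Complex.conj_conj, bf_symm]
    · rw [hsZ11, map_mul, ha, hd, ht]; exact adj_a f w hfw
    · rw [hsZ12, map_smul, map_mul, hb, hc, ht]; exact adj_b q y w hyc hq
    · rw [hsZ21, map_smul, map_mul, hb, hc, ht]; exact adj_c q y w hyc
    · rw [hsZ22, map_mul, ha, hd, ht]; exact adj_d f w hfw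
    · rw [ht]
      refine adj_t w _ ?_
      rw [← ht, ← map_mul, hsZt, h.r11, map_one]
    · intro x x' hx hx' v v'
      rw [hsZadd, map_add, map_add, LinearMap.add_apply, LinearMap.add_apply, bf_add_left,
        bf_add_right, hx, hx']
    · intro x x' hx hx' v v'
      rw [hsZmul, map_mul, map_mul, Module.End.mul_apply, Module.End.mul_apply, hx, hx']
  let I1 : SeminormedAddCommGroup VV :=
    @InnerProductSpace.Core.toSeminormedAddCommGroup ℂ VV _ _ _ (core w hw)
  let I2 : InnerProductSpace ℂ VV := InnerProductSpace.ofCore (core w hw)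
  have hin : ∀ v v' : VV, inner ℂ v v' = bf w v v' := fun v v' => rfl
  have hnorm : ∀ v : VV, ((‖v‖ ^ 2 : ℝ) : ℂ) = bf w v v := fun v => by
    rw [← hin, inner_self_eq_norm_sq_to_K]; simp
  have hpair : ∀ x x' : R, sZ x * x + sZ x' * x' = 1 → ∀ v, ‖π x v‖ ^ 2 + ‖π x' v‖ ^ 2 = ‖v‖ ^ 2 := by
    intro x x' hxx v
    have : (((‖π x v‖ ^ 2 + ‖π x' v‖ ^ 2 : ℝ)) : ℂ) = ((‖v‖ ^ 2 : ℝ) : ℂ) := by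
      rw [Complex.ofReal_add, hnorm, hnorm, hnorm, hadj, hadj, ← bf_add_right,
        ← Module.End.mul_apply, ← Module.End.mul_apply, ← map_mul, ← map_mul,
        ← LinearMap.add_apply, ← map_add, hxx, map_one, Module.End.one_apply]
    exact_mod_cast this
  have hac : sZ a * a + sZ c * c = 1 := by
    rw [hsZ11, hsZ21, h.a'a, ← mul_assoc, h.bct]
    simp [mul_assoc]
  have hbd : sZ b * b + sZ d * d = 1 := by
    rw [hsZ12, hsZ22, smul_mul_assoc, h.bb', mul_assoc, ← h.adt, ← h.r11, add_mul, smul_mul_assoc]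
    simp [mul_assoc, add_comm]
  have htt : sZ t * t + sZ 0 * 0 = 1 := by
    rw [mul_zero, add_zero, hsZt, h.r11]
  have hle : ∀ x x' : R, sZ x * x + sZ x' * x' = 1 → ∃ C : ℝ, 0 ≤ C ∧ ∀ v, ‖π x v‖ ≤ C * ‖v‖ := by
    intro x x' hxx
    refine ⟨1, zero_le_one, fun v => ?_⟩
    rw [one_mul]
    have := hpair x x' hxx v
    exact abs_le_of_sq_le_sq' (by nlinarith [sq_nonneg ‖π x' v‖]) (norm_nonneg _) |>.2
  have hbdd : ∀ x, ∃ C : ℝ, 0 ≤ C ∧ ∀ v, ‖π x v‖ ≤ C * ‖v‖ := by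
    refine hg _ ?_ (hle a c hac) (hle b d hbd) (hle c a (by rw [add_comm, hac]))
      (hle d b (by rw [add_comm, hbd])) (hle t 0 htt) ?_ ?_
    · intro k
      refine ⟨‖k‖, norm_nonneg _, fun v => ?_⟩
      rw [Algebra.algebraMap_eq_smul_one, map_smul, map_one]
      exact (norm_smul k v).le
    · rintro x x' ⟨C, hC0, hC⟩ ⟨C', hC0', hC'⟩
      refine ⟨C + C', by positivity, fun v => ?_⟩
      rw [map_add, LinearMap.add_apply, add_mul]
      exact (norm_add_le _ _).trans (add_le_add (hC v) (hC' v))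
    · rintro x x' ⟨C, hC0, hC⟩ ⟨C', hC0', hC'⟩
      refine ⟨C * C', by positivity, fun v => ?_⟩
      rw [map_mul, Module.End.mul_apply, mul_assoc]
      exact (hC _).trans (mul_le_mul_of_nonneg_left (hC' v) hC0)
  refine generic (V := VV) sZ π hadj hsZinv (fun x => (hbdd x).imp fun C hC => hC.2) ?_
  intro x hx
  refine faithful y f π h hq hg w ha hb hc hd ht hinf x fun n r s hs => ?_
  have h1 := hnorm (π x (Finsupp.single (n, r, 0, 0) 1))
  rw [hx, bf_self] at h1
  have h2 : (π x (Finsupp.single (n, r, 0, 0) 1)).sum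
      (fun s k => w s.1 s.2.1 * ‖k‖ ^ 2) = 0 := by
    have := Complex.ofReal_injective h1
    rw [← this]; simp
  by_contra hne
  have h3 := (Finset.sum_eq_zero_iff_of_nonneg
    (fun s _ => mul_nonneg (hw _ _) (sq_nonneg _))).1 h2 s (by simpa using hne)
  simp [hs, hne] at h3

def rr (Q : ℝ) (u : ℕ → ℝ) (n : ℤ) (t : ℕ) : ℝ := 1 - Q ^ (n + 1) * u t ^ 2

def ff (Q : ℝ) (u : ℕ → ℝ) (n : ℤ) (t : ℕ) : ℂ :=
  if 0 ≤ rr Q u n t then (√(rr Q u n t) : ℂ) else Complex.I * (√(-rr Q u n t) : ℂ)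

theorem ff_sq (Q : ℝ) (u : ℕ → ℝ) (n : ℤ) (t : ℕ) : ff Q u n t ^ 2 = (rr Q u n t : ℂ) := by
  unfold ff
  split_ifs with h
  · rw [← Complex.ofReal_pow, Real.sq_sqrt h]
  · rw [mul_pow, ← Complex.ofReal_pow, Real.sq_sqrt (by linarith), Complex.I_sq]; simp

theorem ff_ne (Q : ℝ) (u : ℕ → ℝ) (n : ℤ) (t : ℕ) (h : rr Q u n t ≠ 0) : ff Q u n t ≠ 0 := by
  intro h0
  have := ff_sq Q u n t
  rw [h0] at this
  apply h
  exact_mod_cast (by simpa using this.symm : (rr Q u n t : ℂ) = 0)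

theorem ff_w (Q : ℝ) (u : ℕ → ℝ) (w : ℤ → ℕ → ℝ)
    (h1 : ∀ n t, 0 < rr Q u n t → w (n + 1) t = w n t)
    (h2 : ∀ n t, rr Q u n t < 0 → w (n + 1) t = 0 ∧ w n t = 0) (n : ℤ) (t : ℕ) :
    (starRingEnd ℂ) (ff Q u n t) * w (n + 1) t = ff Q u n t * w n t := by
  rcases lt_trichotomy (rr Q u n t) 0 with h | h | h
  · rw [(h2 n t h).1, (h2 n t h).2]; simp
  · simp [ff, h]
  · rw [h1 n t h, ff, if_pos h.le, Complex.conj_ofReal]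

theorem params (q : ℝ) (hq : q ≠ 0) : ∃ (u : ℕ → ℝ) (w : ℤ → ℕ → ℝ), (∀ n t, 0 ≤ w n t) ∧
    (∀ n t, 0 < rr (q ^ 2) u n t → w (n + 1) t = w n t) ∧
    (∀ n t, rr (q ^ 2) u n t < 0 → w (n + 1) t = 0 ∧ w n t = 0) ∧
    (∀ K : ℤ, ∃ g : ℕ → ℤ × ℕ, Function.Injective (fun k => (-q) ^ (g k).1 * u (g k).2) ∧
      ∀ k, w (g k).1 (g k).2 ≠ 0 ∧ ∀ e : ℤ, |e - (g k).1| ≤ K → rr (q ^ 2) u e (g k).2 ≠ 0) := by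
  have hQ : 0 < q ^ 2 := by positivity
  have hsq : ∀ n : ℤ, ((-q) ^ n) ^ 2 = (q ^ 2) ^ n := fun n => by
    rw [← zpow_natCast, zpow_comm, zpow_natCast, neg_sq]
  rcases lt_trichotomy (q ^ 2) 1 with h | h | h
  · have hanti := zpow_right_strictAnti₀ hQ h
    have key : ∀ n t, rr (q ^ 2) (fun _ => 1) n t = (q ^ 2) ^ (0 : ℤ) - (q ^ 2) ^ (n + 1) := by
      intro n t; simp [rr]
    refine ⟨fun _ => 1, fun n _ => if 0 ≤ n then 1 else 0, fun n t => by positivity, ?_, ?_, ?_⟩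
    · intro n t hr
      rw [key, sub_pos, hanti.lt_iff_gt] at hr
      simp only; rw [if_pos (by omega), if_pos (by omega)]
    · intro n t hr
      rw [key, sub_neg, hanti.lt_iff_gt] at hr
      simp only; rw [if_neg (by omega), if_neg (by omega)]; simp
    · intro K
      refine ⟨fun k => (|K| + k, 0), ?_, fun k => ⟨?_, ?_⟩⟩
      · intro k k' hk
        have := congrArg (fun x => x ^ 2) hk
        simp only [mul_one, hsq] at this
        have := hanti.injective this
        omega
      · have : 0 ≤ |K| + (k : ℤ) := by positivity
        simp only; rw [if_pos this]; simp
      · intro e he hr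
        rw [key, sub_eq_zero] at hr
        have := hanti.injective hr
        have h2 := neg_abs_le (e - (|K| + (k : ℤ)))
        have h3 := le_abs_self K
        simp only at he
        omega
  · refine ⟨fun t => 1 / (t + 2), fun _ _ => 1, fun _ _ => zero_le_one, fun _ _ _ => rfl, ?_, ?_⟩
    all_goals
      have key : ∀ n t, 0 < rr (q ^ 2) (fun t : ℕ => 1 / ((t : ℝ) + 2)) n t := by
        intro n t
        simp only [rr, h, one_zpow, one_mul, sub_pos]
        rw [sq_lt_one_iff₀ (by positivity), div_lt_one (by positivity)]
        have : (0 : ℝ) ≤ t := Nat.cast_nonneg t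
        linarith
    · intro n t hr
      exact absurd (key n t) (not_lt.2 hr.le)
    · intro K
      refine ⟨fun k => (0, k), ?_, fun k => ⟨one_ne_zero, fun e _ => (key _ _).ne'⟩⟩
      intro k k' hk
      simpa using hk
  · have hmono := zpow_right_strictMono₀ h
    have key : ∀ n t, rr (q ^ 2) (fun _ => 1) n t = (q ^ 2) ^ (0 : ℤ) - (q ^ 2) ^ (n + 1) := by
      intro n t; simp [rr]
    refine ⟨fun _ => 1, fun n _ => if n ≤ -1 then 1 else 0, fun n t => by positivity, ?_, ?_, ?_⟩
    · intro n t hr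
      rw [key, sub_pos, hmono.lt_iff_lt] at hr
      simp only; rw [if_pos (by omega), if_pos (by omega)]
    · intro n t hr
      rw [key, sub_neg, hmono.lt_iff_lt] at hr
      simp only; rw [if_neg (by omega), if_neg (by omega)]; simp
    · intro K
      refine ⟨fun k => (-|K| - k - 2, 0), ?_, fun k => ⟨?_, ?_⟩⟩
      · intro k k' hk
        have := congrArg (fun x => x ^ 2) hk
        simp only [mul_one, hsq] at this
        have := hmono.injective this
        omega
      · have : 0 ≤ |K| + (k : ℤ) := by positivity
        simp only; rw [if_pos (by omega)]; simp
      · intro e he hr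
        rw [key, sub_eq_zero] at hr
        have := hmono.injective hr
        have h2 := le_abs_self (e - (-|K| - (k : ℤ) - 2))
        have h3 := le_abs_self K
        simp only at he
        omega

end Uq

/-- Let `q` be a nonzero real number.  There exists a C*-norm on `U_q(2,-2)`:
a norm `N` with `N(xy) ≤ N(x)N(y)` and `N(x*x) = N(x)²`, where the star `sZ`
is the *-structure of `U_q(2,-2)`. -/
theorem Uq22_has_Cstar_norm (q : ℝ) (hq : q ≠ 0)
    -- the *-structure of `U_q(2,-2)`
    (sZ : GLq22 ℂ (q : ℂ) → GLq22 ℂ (q : ℂ))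
    (hsZadd : ∀ x y, sZ (x + y) = sZ x + sZ y)
    (hsZsmul : ∀ (c : ℂ) x, sZ (c • x) = (starRingEnd ℂ) c • sZ x)
    (hsZinv : ∀ x, sZ (sZ x) = x)
    (hsZmul : ∀ x y, sZ (x * y) = sZ y * sZ x)
    (hsZ11 : sZ (zM ℂ (q : ℂ) 0 0) = zM ℂ (q : ℂ) 1 1 * tauE ℂ (q : ℂ))
    (hsZ12 : sZ (zM ℂ (q : ℂ) 0 1) = (q : ℂ)⁻¹ • (zM ℂ (q : ℂ) 1 0 * tauE ℂ (q : ℂ)))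
    (hsZ21 : sZ (zM ℂ (q : ℂ) 1 0) = (q : ℂ) • (tauE ℂ (q : ℂ) * zM ℂ (q : ℂ) 0 1))
    (hsZ22 : sZ (zM ℂ (q : ℂ) 1 1) = tauE ℂ (q : ℂ) * zM ℂ (q : ℂ) 0 0)
    (hsZt : sZ (tauE ℂ (q : ℂ)) =
      zM ℂ (q : ℂ) 0 0 * zM ℂ (q : ℂ) 1 1 + (q : ℂ)⁻¹ • (zM ℂ (q : ℂ) 0 1 * zM ℂ (q : ℂ) 1 0)) :
    ∃ N : GLq22 ℂ (q : ℂ) → ℝ,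
      (∀ x, 0 ≤ N x) ∧
      (∀ x, N x = 0 → x = 0) ∧
      (∀ (c : ℂ) x, N (c • x) = ‖c‖ * N x) ∧
      (∀ x y, N (x + y) ≤ N x + N y) ∧
      (∀ x y, N (x * y) ≤ N x * N y) ∧
      (∀ x, N (sZ x * x) = N x ^ 2) := by
  obtain ⟨u, w, hw, h1, h2, h3⟩ := Uq.params q hq
  have hq' : (q : ℂ) ≠ 0 := by exact_mod_cast hq
  let y : ℤ → ℕ → ℂ := fun n t => (((-q) ^ n * u t : ℝ) : ℂ)
  let f : ℤ → ℕ → ℂ := Uq.ff (q ^ 2) u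
  have hy : ∀ n t, y (n + 1) t = - (q : ℂ) * y n t := by
    intro n t
    simp only [y]
    rw [zpow_add_one₀ (neg_ne_zero.2 hq)]
    push_cast; ring
  have hf : ∀ n t, f n t ^ 2 = 1 - (q : ℂ) ^ 2 * y n t ^ 2 := by
    intro n t
    have hsq : ((-q) ^ n) ^ 2 = (q ^ 2) ^ n := by
      rw [← zpow_natCast, zpow_comm, zpow_natCast, neg_sq]
    have e : Uq.rr (q ^ 2) u n t = 1 - q ^ 2 * ((-q) ^ n * u t) ^ 2 := by
      rw [Uq.rr, mul_pow, hsq, zpow_add_one₀ (pow_ne_zero 2 hq)]; ring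
    simp only [f, Uq.ff_sq, e, y]
    push_cast; ring
  obtain ⟨φ, ha, hb, hc, hd, ht⟩ := Uq.lifts (q : ℂ) _ _ _ _ _ (Uq.orels (q : ℂ) hq' y f hy hf)
  refine Uq.main (Uq.rels (q : ℂ)) hq' (Uq.gens (q : ℂ)) y f w hw
    (fun n t => Complex.conj_ofReal _) (Uq.ff_w (q ^ 2) u w h1 h2) ?_ φ ha hb hc hd ht sZ
    hsZadd hsZsmul hsZinv hsZmul hsZ11 hsZ12 hsZ21 hsZ22 hsZt
  intro K
  obtain ⟨g, hg1, hg2⟩ := h3 K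
  refine Set.infinite_of_injective_forall_mem (f := fun k => y (g k).1 (g k).2) ?_ ?_
  · intro k k' hk
    exact hg1 (Complex.ofReal_injective hk)
  · intro k
    exact ⟨_, _, rfl, (hg2 k).1, fun e he => Uq.ff_ne _ _ _ _ ((hg2 k).2 e he)⟩

end
end
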